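/- There exists an absolute constant c > 0 such that the following holds: for every integer k ≥ 2, letting p denote the least prime divisor of k, every subset A ⊆ ℤ_k \ {0} with |A| ≤ exp(c·(log p)^{1/3}) is sequenceable. -/

import Mathlib

/-- A list `l` (an ordering of a finite set) is a *sequencing* if its partial sums
`p_i = l_1 + ⋯ + l_i` (for `1 ≤ i ≤ |l|`) are pairwise distinct, and moreover
`p_i ≠ 0` for every `1 ≤ i ≤ |l| - 1`. -/
def IsSequencing {G : Type*} [AddCommGroup G] (l : List G) : Prop :=
  (∀ i j : ℕ, 1 ≤ i → i < j → j ≤ l.length → (l.take i).sum ≠ (l.take j).sum) ∧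
  (∀ i : ℕ, 1 ≤ i → i ≤ l.length - 1 → (l.take i).sum ≠ 0)

/-- A finite subset `A` of an abelian group is *sequenceable* if some ordering of its
elements is a sequencing. -/
def Sequenceable {G : Type*} [AddCommGroup G] [DecidableEq G] (A : Finset G) : Prop :=
  ∃ l : List G, l.Nodup ∧ l.toFinset = A ∧ IsSequencing l



theorem seq_of_list {G : Type*} [AddCommGroup G] [DecidableEq G] (A : Finset G) (l : List G)
    (h1 : l.Nodup) (h2 : l.toFinset = A)
    (h3 : ∀ i j : ℕ, i < j → j ≤ l.length → (0 < i ∨ j < l.length) →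
      (l.take i).sum ≠ (l.take j).sum) : Sequenceable A := by
  refine ⟨l, h1, h2, fun i j hi hij hj => h3 i j hij hj (Or.inl hi), fun i hi hil h => ?_⟩
  exact h3 0 i (by omega) (by omega) (Or.inr (by omega)) (by simpa using h.symm)

theorem seq_of_key {G : Type*} [AddCommGroup G] [DecidableEq G] {Z K : Type*} [Fintype Z]
    [LinearOrder K] (key : Z → K) (hkey : Function.Injective key) (a : Z → G)
    (ha : Function.Injective a)
    (H : ∀ x y : Z, key x ≤ key y →
      ∑ z with key x ≤ key z ∧ key z ≤ key y, a z = 0 →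
      ∀ z, key x ≤ key z ∧ key z ≤ key y) :
    Sequenceable (Finset.univ.image a) := by
  classical
  letI : LinearOrder Z := LinearOrder.lift' key hkey
  have hle : ∀ x y : Z, x ≤ y ↔ key x ≤ key y := fun x y => Iff.rfl
  let e : Fin (Fintype.card Z) ≃o Z := Fintype.orderIsoFinOfCardEq Z rfl
  refine seq_of_list _ (List.ofFn (fun i => a (e i))) ?_ ?_ ?_
  · rw [List.nodup_ofFn]
    exact ha.comp e.injective
  · ext g
    simp only [List.mem_toFinset, List.mem_ofFn, Finset.mem_image, Finset.mem_univ, true_and]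
    constructor
    · rintro ⟨i, rfl⟩; exact ⟨e i, rfl⟩
    · rintro ⟨z, rfl⟩; exact ⟨e.symm z, by simp⟩
  · intro i j hij hj h0 heq
    rw [List.length_ofFn] at hj h0
    rw [List.sum_take_ofFn, List.sum_take_ofFn] at heq
    let ii : Fin (Fintype.card Z) := ⟨i, by omega⟩
    let jj : Fin (Fintype.card Z) := ⟨j - 1, by omega⟩
    have hsub : ∑ t : Fin (Fintype.card Z) with (i ≤ t.val ∧ t.val < j), a (e t) = 0 := by
      have : (Finset.univ.filter (fun t : Fin (Fintype.card Z) => t.val < j)) =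
          (Finset.univ.filter (fun t : Fin (Fintype.card Z) => t.val < i)) ∪
          (Finset.univ.filter (fun t : Fin (Fintype.card Z) => i ≤ t.val ∧ t.val < j)) := by
        ext t; simp; omega
      rw [this, Finset.sum_union] at heq
      · simpa using heq
      · rw [Finset.disjoint_left]; intro t; simp; omega
    have hs2 : ∑ z with key (e ii) ≤ key z ∧ key z ≤ key (e jj), a z = 0 := by
      rw [← hsub]
      symm
      refine Finset.sum_bij (fun t _ => e t) ?_ ?_ ?_ ?_
      · intro t ht
        simp only [Finset.mem_filter, Finset.mem_univ, true_and, ← hle, e.le_iff_le] at ht ⊢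
        simp only [Fin.le_def, ii, jj]; omega
      · intro t _ t' _ h; exact e.injective h
      · intro z hz
        refine ⟨e.symm z, ?_, by simp⟩
        obtain ⟨t, rfl⟩ := e.surjective z
        simp only [Finset.mem_filter, Finset.mem_univ, true_and, ← hle, e.le_iff_le] at hz ⊢
        simp only [Fin.le_def, ii, jj] at hz
        simp; omega
      · intro t _; rfl
    have := H (e ii) (e jj) (by rw [← hle, e.le_iff_le, Fin.le_def]; simp [ii, jj]; omega) hs2
    rcases h0 with h0 | h0
    · have := (this (e ⟨0, by omega⟩)).1
      rw [← hle, e.le_iff_le, Fin.le_def] at this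
      simp [ii] at this; omega
    · have := (this (e ⟨Fintype.card Z - 1, by omega⟩)).2
      rw [← hle, e.le_iff_le, Fin.le_def] at this
      simp [jj] at this; omega


open Finset in
theorem exists_good {ι S κ : Type*} [Fintype ι] [DecidableEq ι] [Fintype S] [Nonempty S]
    (U : ι → S → Prop) (J : ι → ι → S → S → Prop)
    (hloc : ∀ (l : ι) (ω : ι → S), 2 * Nat.card {σ : S // U l σ ∨
      ∃ l', l' ≠ l ∧ (J l l' σ (ω l') ∨ J l' l (ω l') σ)} ≤ Fintype.card S)
    (K : Finset κ) (Ev : κ → (ι → S) → Prop) (blk : κ → ι) (M : ℕ) (hM : 2 * K.card < M)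
    (hE : ∀ e ∈ K, ∀ ω : ι → S,
      M * Nat.card {σ : S // Ev e (Function.update ω (blk e) σ)} ≤ Fintype.card S) :
    ∃ ω : ι → S, (∀ l, ¬ U l (ω l)) ∧ (∀ l l', l ≠ l' → ¬ J l l' (ω l) (ω l')) ∧
      ∀ e ∈ K, ¬ Ev e ω := by
  classical
  set bad : ι → (ι → S) → S → Prop := fun l ω σ => U l σ ∨
      ∃ l', l' ≠ l ∧ (J l l' σ (ω l') ∨ J l' l (ω l') σ) with hbad
  have hloc' : ∀ l ω, 2 * #{σ : S | bad l ω σ} ≤ Fintype.card S := by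
    intro l ω
    have := hloc l ω
    rwa [Nat.card_eq_fintype_card, Fintype.card_subtype] at this
  have hE' : ∀ e ∈ K, ∀ ω : ι → S,
      M * #{σ : S | Ev e (Function.update ω (blk e) σ)} ≤ Fintype.card S := by
    intro e he ω
    have := hE e he ω
    rwa [Nat.card_eq_fintype_card, Fintype.card_subtype] at this
  have hSpos : 0 < Fintype.card S := Fintype.card_pos
  -- existence of a locally good configuration
  have hex : ∀ F : Finset ι, ∃ ω : ι → S, (∀ l ∈ F, ¬ U l (ω l)) ∧
      (∀ l ∈ F, ∀ l' ∈ F, l ≠ l' → ¬ J l l' (ω l) (ω l')) := by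
    intro F
    induction F using Finset.induction_on with
    | empty => exact ⟨fun _ => Classical.arbitrary S, by simp, by simp⟩
    | insert l F hl ih =>
      obtain ⟨ω, h1, h2⟩ := ih
      have : ∃ σ, ¬ bad l ω σ := by
        by_contra hcon
        push Not at hcon
        have h3 := hloc' l ω
        rw [Finset.filter_true_of_mem (fun σ _ => hcon σ), Finset.card_univ] at h3
        omega
      obtain ⟨σ, hσ⟩ := this
      simp only [hbad, not_or, not_exists, not_and] at hσ
      have hne : ∀ l' ∈ F, l' ≠ l := fun l' h h' => hl (h' ▸ h)
      refine ⟨Function.update ω l σ, ?_, ?_⟩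
      · intro l' hl'
        rcases Finset.mem_insert.1 hl' with rfl | h
        · simpa using hσ.1
        · rw [Function.update_of_ne (hne _ h)]; exact h1 _ h
      · intro a ha b hb hab
        rcases Finset.mem_insert.1 ha with ha' | ha'
        · rcases Finset.mem_insert.1 hb with hb' | hb'
          · exact absurd (ha'.trans hb'.symm) hab
          · rw [ha', Function.update_self, Function.update_of_ne (hne _ hb')]
            exact (hσ.2 b (hne _ hb')).1
        · rcases Finset.mem_insert.1 hb with hb' | hb'
          · rw [hb', Function.update_self, Function.update_of_ne (hne _ ha')]
            exact (hσ.2 a (hne _ ha')).2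
          · rw [Function.update_of_ne (hne _ hb'), Function.update_of_ne (hne _ ha')]
            exact h2 a ha' b hb' hab
  set Good : (ι → S) → Prop := fun ω => (∀ l, ¬ U l (ω l)) ∧
      (∀ l l', l ≠ l' → ¬ J l l' (ω l) (ω l')) with hGood
  have hgne : 0 < #{ω : ι → S | Good ω} := by
    obtain ⟨ω, h1, h2⟩ := hex Finset.univ
    exact Finset.card_pos.2 ⟨ω, by simp only [Finset.mem_filter, Finset.mem_univ, true_and]; exact ⟨fun l => h1 l (Finset.mem_univ _), fun l l' => h2 l (Finset.mem_univ _) l' (Finset.mem_univ _)⟩⟩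
  -- resampling
  have hsum : ∀ (l : ι) (p : (ι → S) → Prop),
      ∑ ω : ι → S, #{σ : S | p (Function.update ω l σ)} = Fintype.card S * #{ω : ι → S | p ω} := by
    intro l p
    have e1 : ∑ ω : ι → S, #{σ : S | p (Function.update ω l σ)} =
        #{q : (ι → S) × S | p (Function.update q.1 l q.2)} := by
      simp_rw [Finset.card_filter]
      rw [Fintype.sum_prod_type]
    have e2 : Fintype.card S * #{ω : ι → S | p ω} = #{q : (ι → S) × S | p q.1} := by
      have : (Finset.univ.filter (fun q : (ι → S) × S => p q.1)) =
          (Finset.univ.filter (fun ω : ι → S => p ω)) ×ˢ (Finset.univ : Finset S) := by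
        ext q; simp
      rw [this, Finset.card_product, Finset.card_univ, mul_comm]
    rw [e1, e2]
    refine Finset.card_bij' (fun q _ => (Function.update q.1 l q.2, q.1 l))
      (fun q _ => (Function.update q.1 l q.2, q.1 l)) ?_ ?_ ?_ ?_
    · intro q hq; simpa using hq
    · intro q hq; simpa using hq
    · intro q _; simp
    · intro q _; simp
  have hkey : ∀ e ∈ K, M * #{ω : ι → S | Good ω ∧ Ev e ω} ≤ 2 * #{ω : ι → S | Good ω} := by
    intro e he
    have hpt : ∀ ω : ι → S, M * #{σ : S | Good (Function.update ω (blk e) σ) ∧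
        Ev e (Function.update ω (blk e) σ)} ≤ 2 * #{σ : S | Good (Function.update ω (blk e) σ)} := by
      intro ω
      by_cases hg : ∃ σ0, Good (Function.update ω (blk e) σ0)
      · obtain ⟨σ0, hσ0⟩ := hg
        have hall : ∀ σ, ¬ bad (blk e) ω σ → Good (Function.update ω (blk e) σ) := by
          intro σ hσ
          simp only [hbad, not_or, not_exists, not_and] at hσ
          refine ⟨fun l => ?_, fun a b hab => ?_⟩
          · by_cases hl : l = blk e
            · subst hl; simpa using hσ.1
            · have := hσ0.1 l
              rwa [Function.update_of_ne hl] at this ⊢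
          · by_cases ha : a = blk e
            · have hb : b ≠ blk e := fun h => hab (ha.trans h.symm)
              rw [ha, Function.update_self, Function.update_of_ne hb]
              exact (hσ.2 b hb).1
            · by_cases hb : b = blk e
              · rw [hb, Function.update_self, Function.update_of_ne ha]
                exact (hσ.2 a ha).2
              · have := hσ0.2 a b hab
                rwa [Function.update_of_ne ha, Function.update_of_ne hb] at this ⊢
        have h1 : #{σ : S | ¬ bad (blk e) ω σ} ≤ #{σ : S | Good (Function.update ω (blk e) σ)} := by
          apply Finset.card_le_card
          intro σ; simp only [Finset.mem_filter, Finset.mem_univ, true_and]; exact hall σ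
        have h2 := Finset.card_filter_add_card_filter_not (s := (Finset.univ : Finset S)) (fun σ => bad (blk e) ω σ)
        have h3 := hloc' (blk e) ω
        have h4 : #{σ : S | Good (Function.update ω (blk e) σ) ∧
          Ev e (Function.update ω (blk e) σ)} ≤ #{σ : S | Ev e (Function.update ω (blk e) σ)} := by
          apply Finset.card_le_card
          intro σ; simp only [Finset.mem_filter, Finset.mem_univ, true_and]; exact fun h => h.2
        have h5 := hE' e he ω
        have h6 := Nat.mul_le_mul_left M h4
        rw [Finset.card_univ] at h2
        omega
      · push Not at hg
        simp [hg]
    have := Finset.sum_le_sum (fun ω (_ : ω ∈ Finset.univ) => hpt ω)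
    rw [← Finset.mul_sum, ← Finset.mul_sum] at this
    have g1 : ∑ ω : ι → S, #{σ : S | Good (Function.update ω (blk e) σ) ∧
        Ev e (Function.update ω (blk e) σ)} = Fintype.card S * #{ω : ι → S | Good ω ∧ Ev e ω} := by
      convert hsum (blk e) (fun ω => Good ω ∧ Ev e ω)
    have g2 : ∑ ω : ι → S, #{σ : S | Good (Function.update ω (blk e) σ)} =
        Fintype.card S * #{ω : ι → S | Good ω} := by
      convert hsum (blk e) Good
    have this : M * (Fintype.card S * #{ω : ι → S | Good ω ∧ Ev e ω}) ≤
        2 * (Fintype.card S * #{ω : ι → S | Good ω}) := by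
      rw [← g2, ← g1]; exact this
    have h7 : Fintype.card S * (M * #{ω : ι → S | Good ω ∧ Ev e ω}) ≤
      Fintype.card S * (2 * #{ω : ι → S | Good ω}) := by
      calc _ = M * (Fintype.card S * #{ω : ι → S | Good ω ∧ Ev e ω}) := by ring
        _ ≤ _ := this
        _ = _ := by ring
    exact Nat.le_of_mul_le_mul_left h7 hSpos
  by_contra hcon
  push Not at hcon
  have hsub : (Finset.univ.filter (fun ω : ι → S => Good ω)) ⊆
      K.biUnion (fun e => Finset.univ.filter (fun ω : ι → S => Good ω ∧ Ev e ω)) := by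
    intro ω hω
    simp only [Finset.mem_filter, Finset.mem_univ, true_and] at hω
    obtain ⟨e, he, h⟩ := hcon ω hω.1 hω.2
    simp only [Finset.mem_biUnion, Finset.mem_filter, Finset.mem_univ, true_and]
    exact ⟨e, he, hω, h⟩
  have h8 := (Finset.card_le_card hsub).trans Finset.card_biUnion_le
  have h9 : M * #{ω : ι → S | Good ω} ≤ K.card * (2 * #{ω : ι → S | Good ω}) := by
    calc _ ≤ M * ∑ e ∈ K, #{ω : ι → S | Good ω ∧ Ev e ω} := Nat.mul_le_mul_left _ h8
      _ = ∑ e ∈ K, M * #{ω : ι → S | Good ω ∧ Ev e ω} := Finset.mul_sum _ _ _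
      _ ≤ ∑ e ∈ K, 2 * #{ω : ι → S | Good ω} := Finset.sum_le_sum hkey
      _ = _ := by simp
  nlinarith


def Dissoc {ι G : Type*} [AddCommGroup G] (d : ι → G) : Prop :=
  ∀ F F' : Finset ι, ∑ i ∈ F, d i = ∑ i ∈ F', d i → F = F'

noncomputable def cnt {R : ℕ} {G : Type*} [AddCommGroup G] (d : Fin R → G) (I : Finset (Fin R))
    (c : G) : ℕ := Nat.card {π : Equiv.Perm (Fin R) // ∑ t ∈ I, d (π t) = c}

theorem exists_perm_image {α : Type*} [Fintype α] [DecidableEq α] (F F' : Finset α)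
    (h : F.card = F'.card) : ∃ τ : Equiv.Perm α, F.map τ.toEmbedding = F' := by
  let e : {x // x ∈ F} ≃ {x // x ∈ F'} := Finset.equivOfCardEq h
  refine ⟨Equiv.extendSubtype e, ?_⟩
  apply Finset.eq_of_subset_of_card_le
  · intro x hx
    rw [Finset.mem_map] at hx
    obtain ⟨y, hy, rfl⟩ := hx
    exact Equiv.extendSubtype_mem e y hy
  · rw [Finset.card_map, h]

theorem cnt_mul_choose {R : ℕ} {G : Type*} [AddCommGroup G] (d : Fin R → G) (hd : Dissoc d)
    (I : Finset (Fin R)) (c : G) : cnt d I c * R.choose I.card ≤ R.factorial := by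
  classical
  unfold cnt
  by_cases hne : ∃ π0 : Equiv.Perm (Fin R), ∑ t ∈ I, d (π0 t) = c
  swap
  · push Not at hne
    have : IsEmpty {π : Equiv.Perm (Fin R) // ∑ t ∈ I, d (π t) = c} := ⟨fun x => hne x.1 x.2⟩
    simp
  obtain ⟨π0, h0⟩ := hne
  set F0 := I.map π0.toEmbedding with hF0
  have hF : ∀ π : Equiv.Perm (Fin R), ∑ t ∈ I, d (π t) = c → I.map π.toEmbedding = F0 := by
    intro π hπ
    apply hd
    rw [hF0, Finset.sum_map, Finset.sum_map]
    simp only [Equiv.coe_toEmbedding]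
    rw [hπ, h0]
  have hτ : ∀ F : {F : Finset (Fin R) // F ∈ Finset.powersetCard I.card Finset.univ},
      ∃ τ : Equiv.Perm (Fin R), F0.map τ.toEmbedding = F.1 := by
    intro F
    apply exists_perm_image
    rw [(Finset.mem_powersetCard.1 F.2).2, hF0, Finset.card_map]
  choose τ hτ using hτ
  have hinj : Function.Injective (fun q : {π : Equiv.Perm (Fin R) // ∑ t ∈ I, d (π t) = c} ×
      {F : Finset (Fin R) // F ∈ Finset.powersetCard I.card Finset.univ} =>
      (q.1.1.trans (τ q.2) : Equiv.Perm (Fin R))) := by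
    rintro ⟨π, F⟩ ⟨π', F'⟩ h
    have key : ∀ (q : {π : Equiv.Perm (Fin R) // ∑ t ∈ I, d (π t) = c})
      (F : {F : Finset (Fin R) // F ∈ Finset.powersetCard I.card Finset.univ}),
      I.map (q.1.trans (τ F)).toEmbedding = F.1 := by
      intro q F
      rw [← hτ F, ← hF q.1 q.2, Finset.map_map]
      rfl
    simp only at h
    have hFF : F = F' := by
      apply Subtype.ext
      rw [← key π F, ← key π' F', h]
    subst hFF
    have : π = π' := by
      apply Subtype.ext
      ext t
      have := congrArg (fun f : Equiv.Perm (Fin R) => f t) h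
      simp at this
      rw [this]
    rw [this]
  have := Fintype.card_le_of_injective _ hinj
  rw [Fintype.card_prod, Fintype.card_perm, Fintype.card_fin] at this
  rw [Nat.card_eq_fintype_card]
  refine le_trans (le_of_eq ?_) this
  congr 1
  rw [Fintype.card_coe, Finset.card_powersetCard, Finset.card_univ, Fintype.card_fin]

theorem two_pow_le_choose (T : ℕ) : ∀ n u : ℕ, T ≤ u → u + T ≤ n → 2 ^ T ≤ n.choose u := by
  induction T with
  | zero => intro n u _ h; rw [pow_zero]; exact Nat.choose_pos (by omega)
  | succ T ih =>
    intro n u h1 h2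
    obtain ⟨n, rfl⟩ : ∃ m, n = m + 1 := ⟨n - 1, by omega⟩
    obtain ⟨u, rfl⟩ : ∃ m, u = m + 1 := ⟨u - 1, by omega⟩
    rw [Nat.choose_succ_succ', pow_succ]
    have a := ih n u (by omega) (by omega)
    have b := ih n (u+1) (by omega) (by omega)
    omega

theorem le_choose (n : ℕ) : ∀ u : ℕ, 1 ≤ u → u + 1 ≤ n → n ≤ n.choose u := by
  induction n with
  | zero => intro u _ h; omega
  | succ n ih =>
    intro u h1 h2
    obtain ⟨u, rfl⟩ : ∃ m, u = m + 1 := ⟨u - 1, by omega⟩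
    rw [Nat.choose_succ_succ']
    rcases Nat.eq_zero_or_pos u with rfl | hu
    · simp
    · have := ih u hu (by omega)
      have : 0 < n.choose (u+1) := Nat.choose_pos (by omega)
      omega

theorem choose_two_le (n u : ℕ) (h1 : 2 ≤ u) (h2 : 2 * u ≤ n) : n.choose 2 ≤ n.choose u := by
  induction u, h1 using Nat.le_induction with
  | base => exact le_rfl
  | succ u hu ih =>
    exact (ih (by omega)).trans (Nat.choose_le_succ_of_lt_half_left (by omega))

theorem sum_cnt_le {R : ℕ} {G : Type*} [AddCommGroup G] (d : Fin R → G) (I : Finset (Fin R))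
    (C : Finset G) : ∑ c ∈ C, cnt d I c ≤ R.factorial := by
  classical
  have : ∀ c, cnt d I c = (Finset.univ.filter (fun π : Equiv.Perm (Fin R) => ∑ t ∈ I, d (π t) = c)).card := by
    intro c
    unfold cnt
    rw [Nat.card_eq_fintype_card, Fintype.card_subtype]
  simp_rw [this]
  rw [← Finset.card_biUnion]
  · refine (Finset.card_le_univ _).trans ?_
    rw [Fintype.card_perm, Fintype.card_fin]
  · intro x _ y _ hxy
    rw [Function.onFun, Finset.disjoint_left]
    intro π h1 h2
    simp only [Finset.mem_filter, Finset.mem_univ, true_and] at h1 h2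
    exact hxy (h1.symm.trans h2)

noncomputable def phi {R : ℕ} {G : Type*} [AddCommGroup G] (d : Fin R → G)
    (sd : ℕ → Finset (Fin R)) (T : ℕ) (c : G) : ℕ := ∑ u ∈ Finset.Ico 1 T, cnt d (sd u) c

theorem sum_phi_le {R : ℕ} {G : Type*} [AddCommGroup G] (d : Fin R → G)
    (sd : ℕ → Finset (Fin R)) (T : ℕ) (C : Finset G) :
    ∑ c ∈ C, phi d sd T c ≤ T * R.factorial := by
  unfold phi
  rw [Finset.sum_comm]
  calc _ ≤ ∑ u ∈ Finset.Ico 1 T, R.factorial := Finset.sum_le_sum (fun u _ => sum_cnt_le _ _ _)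
    _ = (T - 1) * R.factorial := by simp
    _ ≤ _ := Nat.mul_le_mul_right _ (by omega)

theorem phi_le {R : ℕ} {G : Type*} [AddCommGroup G] (d : Fin R → G) (hd : Dissoc d)
    (sd : ℕ → Finset (Fin R)) (T : ℕ) (hT : 2 * T + 1 ≤ R)
    (hsd : ∀ u ∈ Finset.Ico 1 T, (sd u).card = u) (c : G) :
    R * phi d sd T c ≤ 2 * R.factorial := by
  unfold phi
  rcases Nat.lt_or_ge 1 T with h | h
  swap
  · rw [Finset.Ico_eq_empty (by omega)]; simp
  rw [Finset.sum_eq_sum_Ico_succ_bot h]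
  have h1 : R * cnt d (sd 1) c ≤ R.factorial := by
    have := cnt_mul_choose d hd (sd 1) c
    rw [hsd 1 (by simp; omega), Nat.choose_one_right] at this
    linarith
  have h2 : ∀ u ∈ Finset.Ico (1+1) T, R * (T * cnt d (sd u) c) ≤ R.factorial := by
    intro u hu
    rw [Finset.mem_Ico] at hu
    have := cnt_mul_choose d hd (sd u) c
    rw [hsd u (by simp; omega)] at this
    have h3 := choose_two_le R u hu.1 (by omega)
    have h4 : R * T ≤ R.choose 2 := by
      rw [Nat.choose_two_right, Nat.le_div_iff_mul_le (by norm_num)]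
      have : 2 * T ≤ R - 1 := by omega
      nlinarith
    calc _ = cnt d (sd u) c * (R * T) := by ring
      _ ≤ _ := Nat.mul_le_mul_left _ (h4.trans h3)
      _ ≤ _ := this
  have h5 : T * (R * ∑ u ∈ Finset.Ico (1+1) T, cnt d (sd u) c) ≤ T * R.factorial := by
    calc _ = ∑ u ∈ Finset.Ico (1+1) T, R * (T * cnt d (sd u) c) := by
          rw [Finset.mul_sum, Finset.mul_sum]; exact Finset.sum_congr rfl (fun _ _ => by ring)
      _ ≤ ∑ u ∈ Finset.Ico (1+1) T, R.factorial := Finset.sum_le_sum h2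
      _ = (T - 2) * R.factorial := by simp
      _ ≤ _ := Nat.mul_le_mul_right _ (by omega)
  have h6 := Nat.le_of_mul_le_mul_left h5 (by omega)
  linarith


def RectOn {G : Type*} [AddCommGroup G] (X : Finset G) (ρ : G → ℤ) : Prop :=
  ∀ F ⊆ X, ∀ F' ⊆ X, (∑ x ∈ F, x = ∑ x ∈ F', x ↔ ∑ x ∈ F, ρ x = ∑ x ∈ F', ρ x)

theorem RectOn.mono {G : Type*} [AddCommGroup G] {X Y : Finset G} {ρ : G → ℤ}
    (h : RectOn X ρ) (hYX : Y ⊆ X) : RectOn Y ρ :=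
  fun F hF F' hF' => h F (hF.trans hYX) F' (hF'.trans hYX)

theorem RectOn.neg {G : Type*} [AddCommGroup G] {X : Finset G} {ρ : G → ℤ}
    (h : RectOn X ρ) : RectOn X (fun x => - ρ x) := by
  intro F hF F' hF'
  rw [h F hF F' hF']
  simp

theorem RectOn.list {G : Type*} [AddCommGroup G] {X : Finset G} {ρ : G → ℤ}
    (h : RectOn X ρ) (L L' : List G) (hL : L.Nodup) (hL' : L'.Nodup) (hX : ∀ x ∈ L, x ∈ X)
    (hX' : ∀ x ∈ L', x ∈ X) : L.sum = L'.sum ↔ (L.map ρ).sum = (L'.map ρ).sum := by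
  classical
  have := h L.toFinset (fun x hx => hX x (by simpa using hx)) L'.toFinset
    (fun x hx => hX' x (by simpa using hx))
  rw [List.sum_toFinset _ hL, List.sum_toFinset _ hL', List.sum_toFinset _ hL,
    List.sum_toFinset _ hL'] at this
  simpa using this

theorem exists_smallest {G : Type*} [DecidableEq G] (X : Finset G) (ρ : G → ℤ) (q : ℕ)
    (hq : q ≤ X.card) : ∃ Es ⊆ X, Es.card = q ∧ ∀ e ∈ Es, ∀ x ∈ X \ Es, ρ e ≤ ρ x := by
  induction q with
  | zero => exact ⟨∅, by simp, by simp, by simp⟩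
  | succ q ih =>
    obtain ⟨Es, h1, h2, h3⟩ := ih (by omega)
    have hne : (X \ Es).Nonempty := by
      rw [← Finset.card_pos, Finset.card_sdiff_of_subset h1]; omega
    obtain ⟨m, hm, hmin⟩ := Finset.exists_min_image (X \ Es) ρ hne
    rw [Finset.mem_sdiff] at hm
    refine ⟨insert m Es, ?_, ?_, ?_⟩
    · exact Finset.insert_subset hm.1 h1
    · rw [Finset.card_insert_of_notMem hm.2, h2]
    · intro e he x hx
      rw [Finset.mem_sdiff, Finset.mem_insert, not_or] at hx
      have hx' : x ∈ X \ Es := Finset.mem_sdiff.2 ⟨hx.1, hx.2.2⟩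
      rcases Finset.mem_insert.1 he with rfl | he
      · exact hmin x hx'
      · exact h3 e he x hx'

theorem ord_avoid {G : Type*} [AddCommGroup G] [DecidableEq G] (f : G) (m : ℕ) :
    ∀ X : Finset G, X.card = m → ∃ L : List G, L.Nodup ∧ L.toFinset = X ∧
      ∀ i, 0 < i → i < L.length → (L.take i).sum ≠ f := by
  induction m with
  | zero =>
    intro X hX
    rw [Finset.card_eq_zero] at hX
    exact ⟨[], by simp, by simp [hX], by simp⟩
  | succ m ih =>
    intro X hX
    have : ∃ y ∈ X, m = 0 ∨ ∑ x ∈ X, x - y ≠ f := by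
      by_cases hm : m = 0
      · obtain ⟨y, hy⟩ := Finset.card_pos.1 (by omega : 0 < X.card)
        exact ⟨y, hy, Or.inl hm⟩
      · obtain ⟨a, ha, b, hb, hab⟩ := Finset.one_lt_card.1 (by omega : 1 < X.card)
        by_cases h : ∑ x ∈ X, x - a = f
        · refine ⟨b, hb, Or.inr ?_⟩
          intro h'
          rw [← h'] at h
          exact hab (by simpa using h)
        · exact ⟨a, ha, Or.inr h⟩
    obtain ⟨y, hy, hy'⟩ := this
    obtain ⟨L, h1, h2, h3⟩ := ih (X.erase y) (by rw [Finset.card_erase_of_mem hy]; omega)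
    have hlen : L.length = m := by
      rw [← List.toFinset_card_of_nodup h1, h2, Finset.card_erase_of_mem hy]; omega
    have hyL : y ∉ L := by
      intro h
      have : y ∈ L.toFinset := by simpa using h
      rw [h2] at this
      simp at this
    have hsum : L.sum = ∑ x ∈ X, x - y := by
      have := List.sum_toFinset (fun x : G => x) h1
      rw [h2, Finset.sum_erase_eq_sub hy] at this
      simpa using this.symm
    refine ⟨L ++ [y], ?_, ?_, ?_⟩
    · rw [List.nodup_append]; simp [h1]; exact fun a ha h => hyL (h ▸ ha)
    · rw [List.toFinset_append, h2]
      ext x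
      by_cases hx : x = y <;> simp [hx, hy]
    · intro i hi hi2
      simp at hi2
      rw [List.take_append_of_le_length (by omega)]
      rcases Nat.lt_or_ge i L.length with h | h
      · exact h3 i hi h
      · rw [List.take_of_length_le h, hsum]
        rcases hy' with h' | h'
        · omega
        · exact h'

theorem ord_large {G : Type*} [AddCommGroup G] [DecidableEq G] (X : Finset G) (ρ : G → ℤ)
    (hpos : ∀ x ∈ X, 0 < ρ x) (hr : RectOn X ρ) (w : G → ℕ) (W : ℕ)
    (hW : ∀ C : Finset G, ∑ c ∈ C, w c ≤ W) (q K : ℕ) (hq : 0 < q) (hK : 0 < K)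
    (hX : X.card = q + K) :
    ∃ L : List G, L.Nodup ∧ L.toFinset = X ∧
      q * K * ∑ j ∈ Finset.range (q + K - 1), w ((L.take (j+1)).sum) ≤ W * (K + q * q) := by
  obtain ⟨Es, hEs, hEc, hmin⟩ := exists_smallest X ρ q (by omega)
  set B := X \ Es with hB
  have hBc : B.card = K := by rw [hB, Finset.card_sdiff_of_subset hEs]; omega
  let Lb := B.toList
  have hLbn : Lb.Nodup := B.nodup_toList
  have hLb : ∀ x, x ∈ Lb ↔ x ∈ B := fun x => Finset.mem_toList
  have hLbl : Lb.length = K := by simp [Lb, hBc]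
  have hBX : ∀ x ∈ B, x ∈ X := fun x hx => (Finset.mem_sdiff.1 hx).1
  have hBE : ∀ x ∈ B, x ∉ Es := fun x hx => (Finset.mem_sdiff.1 hx).2
  let Ls : G → G → List G := fun e y => e :: (Lb.erase y ++ ((Es.erase e).toList ++ [y]))
  -- the cost
  let c1 : G → G → ℕ := fun e y => ∑ l ∈ Finset.range K, w (e + ((Lb.erase y).take l).sum)
  let c2 : G → G → ℕ := fun e y => ∑ j ∈ Finset.range (q-1),
    w (e + ((Lb.sum - y) + (((Es.erase e).toList).take (j+1)).sum))
  have hlenE : ∀ y ∈ B, (Lb.erase y).length = K - 1 := by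
    intro y hy
    rw [List.length_erase_of_mem ((hLb y).2 hy), hLbl]
  have hlenS : ∀ e ∈ Es, ((Es.erase e).toList).length = q - 1 := by
    intro e he
    rw [Finset.length_toList, Finset.card_erase_of_mem he, hEc]
  have hsumE : ∀ y ∈ B, (Lb.erase y).sum = Lb.sum - y := by
    intro y hy
    rw [← List.sum_erase ((hLb y).2 hy)]; simp
  have hcost : ∀ e ∈ Es, ∀ y ∈ B,
      ∑ j ∈ Finset.range (q + K - 1), w (((Ls e y).take (j+1)).sum) = c1 e y + c2 e y := by
    intro e he y hy
    rw [show q + K - 1 = K + (q - 1) by omega, Finset.sum_range_add]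
    congr 1
    · apply Finset.sum_congr rfl
      intro l hl
      rw [Finset.mem_range] at hl
      simp only [Ls, List.take_succ_cons, List.sum_cons]
      rw [List.take_append_of_le_length (by rw [hlenE y hy]; omega)]
    · apply Finset.sum_congr rfl
      intro j hj
      rw [Finset.mem_range] at hj
      simp only [Ls, List.take_succ_cons, List.sum_cons]
      rw [show K + j = (Lb.erase y).length + (j + 1) by rw [hlenE y hy]; omega,
        List.take_length_add_append, List.sum_append, hsumE y hy,
        List.take_append_of_le_length (by rw [hlenS e he]; omega)]
  have hc1 : ∀ y ∈ B, ∑ e ∈ Es, c1 e y ≤ W := by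
    intro y hy
    simp only [c1]
    rw [← Finset.sum_product']
    have hnd : (Lb.erase y).Nodup := hLbn.erase y
    have hin : ∀ x ∈ Lb.erase y, x ∈ B := fun x hx => (hLb x).1 (List.mem_of_mem_erase hx)
    have aux : ∀ e ∈ Es, ∀ e' ∈ Es, ∀ l l' : ℕ, l < l' → l' < K →
        e + ((Lb.erase y).take l).sum ≠ e' + ((Lb.erase y).take l').sum := by
      intro e he e' he' l l' hl hl' heq
      have hnd2 : ∀ e ∈ Es, ∀ l, (e :: (Lb.erase y).take l).Nodup := by
        intro e he l
        rw [List.nodup_cons]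
        refine ⟨fun h => hBE e (hin e (List.mem_of_mem_take h)) he, hnd.sublist (List.take_sublist _ _)⟩
      have hin2 : ∀ e ∈ Es, ∀ l, ∀ x ∈ (e :: (Lb.erase y).take l), x ∈ X := by
        intro e he l x hx
        rcases List.mem_cons.1 hx with rfl | hx
        · exact hEs he
        · exact hBX _ (hin _ (List.mem_of_mem_take hx))
      have h1 := (hr.list _ _ (hnd2 e he l) (hnd2 e' he' l') (hin2 e he l) (hin2 e' he' l')).1
        (by simpa using heq)
      obtain ⟨r, rfl⟩ : ∃ r, l' = l + (r + 1) := ⟨l' - l - 1, by omega⟩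
      rw [List.take_add, List.map_cons, List.map_cons, List.sum_cons, List.sum_cons,
        List.map_append, List.sum_append] at h1
      have hl2 : l < (Lb.erase y).length := by rw [hlenE y hy]; omega
      rw [List.drop_eq_getElem_cons hl2, List.take_succ_cons, List.map_cons, List.sum_cons] at h1
      have h2 : 0 ≤ ((((Lb.erase y).drop (l+1)).take r).map ρ).sum := by
        apply List.sum_nonneg
        intro z hz
        rw [List.mem_map] at hz
        obtain ⟨x, hx, rfl⟩ := hz
        exact (hpos x (hBX _ (hin _ (List.mem_of_mem_drop (List.mem_of_mem_take hx))))).le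
      have h3 := hmin e he _ (hin _ (List.getElem_mem hl2))
      have h4 := hpos e' (hEs he')
      omega
    have hinj : Set.InjOn (fun p : G × ℕ => p.1 + ((Lb.erase y).take p.2).sum)
        ((Es ×ˢ Finset.range K : Finset (G × ℕ)) : Set (G × ℕ)) := by
      rintro ⟨e, l⟩ h ⟨e', l'⟩ h' heq
      simp only [Finset.coe_product, Set.mem_prod, Finset.mem_coe, Finset.mem_range] at h h' heq
      rcases lt_trichotomy l l' with hl | hl | hl
      · exact absurd heq (aux e h.1 e' h'.1 l l' hl h'.2)
      · subst hl
        simp at heq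
        rw [heq]
      · exact absurd heq.symm (aux e' h'.1 e h.1 l' l hl h.2)
    rw [← Finset.sum_image (f := w) (g := fun p : G × ℕ => p.1 + ((Lb.erase y).take p.2).sum) hinj]
    exact hW _
  have hc2 : ∀ e ∈ Es, ∑ y ∈ B, c2 e y ≤ q * W := by
    intro e he
    simp only [c2]
    rw [Finset.sum_comm]
    calc _ ≤ ∑ j ∈ Finset.range (q-1), W := by
          apply Finset.sum_le_sum
          intro j hj
          rw [← Finset.sum_image (f := w) (g := fun y : G => e + ((Lb.sum - y) +
            (((Es.erase e).toList).take (j+1)).sum))]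
          · exact hW _
          · intro y _ y' _ h
            simpa using h
      _ = (q - 1) * W := by simp
      _ ≤ _ := Nat.mul_le_mul_right _ (by omega)
  have htot : ∑ p ∈ Es ×ˢ B, (c1 p.1 p.2 + c2 p.1 p.2) ≤ W * (K + q * q) := by
    rw [Finset.sum_add_distrib, Finset.sum_product_right (f := fun p : G × G => c1 p.1 p.2),
      Finset.sum_product (f := fun p : G × G => c2 p.1 p.2)]
    have a1 := Finset.sum_le_sum hc1
    have a2 := Finset.sum_le_sum hc2
    simp only [Finset.sum_const, smul_eq_mul, hBc, hEc] at a1 a2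
    calc _ ≤ K * W + q * (q * W) := add_le_add a1 a2
      _ = _ := by ring
  have hne : (Es ×ˢ B).Nonempty := by
    rw [← Finset.card_pos, Finset.card_product, hEc, hBc]; positivity
  have : ∃ p ∈ Es ×ˢ B, q * K * (c1 p.1 p.2 + c2 p.1 p.2) ≤ W * (K + q * q) := by
    by_contra hcon
    push Not at hcon
    have h1 := Finset.sum_lt_sum_of_nonempty hne hcon
    rw [Finset.sum_const, Finset.card_product, hEc, hBc, smul_eq_mul, ← Finset.mul_sum] at h1
    have h2 := Nat.mul_le_mul_left (q * K) htot
    omega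
  obtain ⟨⟨e, y⟩, hp, hc⟩ := this
  rw [Finset.mem_product] at hp
  refine ⟨Ls e y, ?_, ?_, ?_⟩
  · simp only [Ls]
    have p1 : (Lb.erase y ++ ((Es.erase e).toList ++ [y])).Perm (y :: Lb.erase y ++ (Es.erase e).toList) := by
      rw [← List.append_assoc]
      exact (List.perm_append_singleton _ _)
    have p2 : (Lb.erase y ++ ((Es.erase e).toList ++ [y])).Perm (Lb ++ (Es.erase e).toList) :=
      p1.trans ((List.perm_cons_erase ((hLb y).2 hp.2)).symm.append_right _)
    have p3 := p2.cons e
    rw [p3.nodup_iff, List.nodup_cons, List.nodup_append]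
    refine ⟨?_, hLbn, Finset.nodup_toList _, ?_⟩
    · simp only [List.mem_append, not_or]
      exact ⟨fun h => hBE _ ((hLb _).1 h) hp.1, by simp⟩
    · intro a ha b hb hab
      subst hab
      simp at hb
      exact hBE _ ((hLb _).1 ha) hb.2
  · ext x
    have hx : x ∈ X ↔ x ∈ B ∨ x ∈ Es := by
      rw [hB, Finset.mem_sdiff]
      have := @hEs x
      tauto
    simp only [Ls, List.mem_toFinset, List.mem_cons, List.mem_append, Finset.mem_toList,
      Finset.mem_erase, List.not_mem_nil, or_false, hLbn.mem_erase_iff, hLb, hx]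
    by_cases h1 : x = e
    · subst h1; simp [hp.1]
    · by_cases h2 : x = y
      · subst h2; simp [hp.2]
      · simp [h1, h2]
  · rw [hcost e hp.1 y hp.2]; exact hc

theorem ord {G : Type*} [AddCommGroup G] [DecidableEq G] (X : Finset G) (ρ : G → ℤ)
    (hpos : ∀ x ∈ X, 0 < ρ x) (hr : RectOn X ρ) (w : G → ℕ) (R T N0 : ℕ) (hT : 1 ≤ T)
    (hN0 : 1 ≤ N0)
    (hW : ∀ C : Finset G, ∑ c ∈ C, w c ≤ 2 * T * N0) (hw : ∀ c, R * w c ≤ 4 * N0)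
    (hR : 100 * (200 * T + (200 * T) ^ 2) ≤ R) (f : G) :
    ∃ L : List G, L.Nodup ∧ L.toFinset = X ∧ (∀ i, 0 < i → i < L.length → (L.take i).sum ≠ f) ∧
      25 * ∑ i ∈ Finset.Ico 1 L.length, w ((L.take i).sum) ≤ N0 := by
  set q := 200 * T with hq
  rcases Nat.lt_or_ge X.card (q + q ^ 2) with h | h
  · obtain ⟨L, h1, h2, h3⟩ := ord_avoid f X.card X rfl
    refine ⟨L, h1, h2, h3, ?_⟩
    have hlen : L.length = X.card := by rw [← h2, List.toFinset_card_of_nodup h1]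
    have h4 : R * ∑ i ∈ Finset.Ico 1 L.length, w ((L.take i).sum) ≤ (q + q^2) * (4 * N0) := by
      rw [Finset.mul_sum]
      calc _ ≤ ∑ i ∈ Finset.Ico 1 L.length, 4 * N0 := Finset.sum_le_sum (fun i _ => hw _)
        _ = (L.length - 1) * (4 * N0) := by simp
        _ ≤ _ := Nat.mul_le_mul_right _ (by omega)
    have h5 := Nat.mul_le_mul_right (∑ i ∈ Finset.Ico 1 L.length, w ((L.take i).sum)) hR
    have h6 : 0 < q + q^2 := by positivity
    nlinarith
  · set w' : G → ℕ := fun c => w c + if c = f then 2 * T * N0 else 0 with hw'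
    obtain ⟨K, hK⟩ : ∃ K, X.card = q + K := ⟨X.card - q, by omega⟩
    have hKq : q ^ 2 ≤ K := by omega
    have hqp : 0 < q := by omega
    have hKp : 0 < K := lt_of_lt_of_le (by positivity) hKq
    have hW' : ∀ C : Finset G, ∑ c ∈ C, w' c ≤ 4 * T * N0 := by
      intro C
      simp only [hw', Finset.sum_add_distrib, Finset.sum_ite_eq']
      have := hW C
      split_ifs <;> nlinarith
    obtain ⟨L, h1, h2, h3⟩ := ord_large X ρ hpos hr w' _ hW' q K hqp hKp hK
    have hlen : L.length = q + K := by rw [← hK, ← h2, List.toFinset_card_of_nodup h1]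
    have hsum : ∑ j ∈ Finset.range (q + K - 1), w' ((L.take (j+1)).sum) =
        ∑ i ∈ Finset.Ico 1 L.length, w' ((L.take i).sum) := by
      rw [Finset.sum_Ico_eq_sum_range, hlen]
      exact Finset.sum_congr rfl (fun j _ => by rw [add_comm])
    rw [hsum] at h3
    set cost := ∑ i ∈ Finset.Ico 1 L.length, w' ((L.take i).sum) with hcost
    have h4 : 25 * cost ≤ N0 := by
      have : K * (q * cost) ≤ K * (8 * T * N0) := by
        calc _ = q * K * cost := by ring
          _ ≤ _ := h3
          _ ≤ 4 * T * N0 * (K + K) := Nat.mul_le_mul_left _ (by nlinarith)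
          _ = _ := by ring
      have := Nat.le_of_mul_le_mul_left this hKp
      have : (8 * T) * (25 * cost) ≤ (8 * T) * N0 := by
        calc _ = q * cost := by rw [hq]; ring
          _ ≤ _ := this
      exact Nat.le_of_mul_le_mul_left this (by omega)
    refine ⟨L, h1, h2, ?_, ?_⟩
    · intro i hi hi2 heq
      have h5 : w' ((L.take i).sum) ≤ cost :=
        Finset.single_le_sum (f := fun i => w' ((L.take i).sum)) (fun _ _ => Nat.zero_le _)
          (Finset.mem_Ico.2 ⟨hi, hi2⟩)
      simp only [hw', heq, if_true] at h5
      nlinarith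
    · refine le_trans ?_ h4
      apply Nat.mul_le_mul_left
      apply Finset.sum_le_sum
      intro i _
      simp [hw']


def InfGood {G : Type*} (ρ : G → ℤ) (L : List G) : Prop :=
  ∀ m : List G, m ≠ [] → m <:+: L → (m.map ρ).sum = 0 → m = L

theorem my_sum_map_neg {G : Type*} (ρ : G → ℤ) (l : List G) :
    (l.map (fun x => - ρ x)).sum = - (l.map ρ).sum := by
  induction l with
  | nil => simp
  | cons a l ih => simp [ih]; ring

theorem rect_core {G : Type*} [DecidableEq G] (n : ℕ) :
    ∀ (A : Finset G) (ρ : G → ℤ), A.card = n → (∀ x ∈ A, ρ x ≠ 0) → Set.InjOn ρ (A : Set G) →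
    ∃ X Y : List G, (∀ x ∈ X, 0 < ρ x) ∧ (∀ x ∈ Y, ρ x < 0) ∧ (X ++ Y).Nodup ∧
      (X ++ Y).toFinset = A ∧ InfGood ρ (X ++ Y) := by
  induction n with
  | zero =>
    intro A ρ hA _ _
    rw [Finset.card_eq_zero] at hA
    refine ⟨[], [], by simp, by simp, by simp, by simp [hA], ?_⟩
    intro m hm h
    simp at h
    exact absurd h hm
  | succ n ih =>
    have main : ∀ (A : Finset G) (ρ : G → ℤ), A.card = n + 1 → (∀ x ∈ A, ρ x ≠ 0) →
        Set.InjOn ρ (A : Set G) → 0 ≤ ∑ x ∈ A, ρ x →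
        ∃ X Y : List G, (∀ x ∈ X, 0 < ρ x) ∧ (∀ x ∈ Y, ρ x < 0) ∧ (X ++ Y).Nodup ∧
          (X ++ Y).toFinset = A ∧ InfGood ρ (X ++ Y) := by
      intro A ρ hA h0 hinj htot
      have hp : ∃ p ∈ A, 0 < ρ p ∧ (A = {p} ∨ ∑ x ∈ A, ρ x - ρ p ≠ 0) := by
        have hne : A.Nonempty := Finset.card_pos.1 (by omega)
        have : ∃ p ∈ A, 0 < ρ p := by
          by_contra hcon
          push Not at hcon
          have : ∑ x ∈ A, ρ x < 0 :=
            Finset.sum_neg (fun x hx => lt_of_le_of_ne (hcon x hx) (h0 x hx)) hne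
          omega
        obtain ⟨p, hp, hpp⟩ := this
        by_cases h1 : ∑ x ∈ A, ρ x - ρ p = 0
        swap
        · exact ⟨p, hp, hpp, Or.inr h1⟩
        by_cases h2 : ∃ p' ∈ A, 0 < ρ p' ∧ p' ≠ p
        · obtain ⟨p', hp', hpp', hne'⟩ := h2
          refine ⟨p', hp', hpp', Or.inr ?_⟩
          intro h3
          exact hne' (hinj hp' hp (by omega))
        · push Not at h2
          refine ⟨p, hp, hpp, Or.inl ?_⟩
          by_contra h3
          have h4 : (A.erase p).Nonempty := by
            rw [Finset.nonempty_iff_ne_empty, Ne, Finset.erase_eq_empty_iff]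
            push Not
            exact ⟨hne, h3⟩
          have : ∑ x ∈ A.erase p, ρ x < 0 := by
            refine Finset.sum_neg (fun x hx => ?_) h4
            rw [Finset.mem_erase] at hx
            have := h0 x hx.2
            by_contra h5
            exact hx.1 (h2 x hx.2 (by omega))
          rw [Finset.sum_erase_eq_sub hp] at this
          omega
      obtain ⟨p, hpA, hpp, hp2⟩ := hp
      obtain ⟨X, Y, hX, hY, hnd, hfs, hg⟩ := ih (A.erase p) ρ
        (by rw [Finset.card_erase_of_mem hpA]; omega)
        (fun x hx => h0 x (Finset.mem_of_mem_erase hx))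
        (hinj.mono (by simp))
      have hpn : p ∉ X ++ Y := by
        intro h
        have : p ∈ (X ++ Y).toFinset := by simpa using h
        rw [hfs] at this
        simp at this
      have hsum' : ((X ++ Y).map ρ).sum = ∑ x ∈ A, ρ x - ρ p := by
        rw [← List.sum_toFinset _ hnd, hfs, Finset.sum_erase_eq_sub hpA]
      have hX' : ∀ x ∈ p :: X, 0 < ρ x := by
        intro x hx
        rcases List.mem_cons.1 hx with rfl | hx
        · exact hpp
        · exact hX x hx
      refine ⟨p :: X, Y, hX', hY, ?_, ?_, ?_⟩
      · rw [List.cons_append, List.nodup_cons]; exact ⟨hpn, hnd⟩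
      · rw [List.cons_append, List.toFinset_cons, hfs, Finset.insert_erase hpA]
      · intro m hm hinf hs
        rw [List.cons_append, List.infix_cons_iff] at hinf
        rcases hinf with ⟨r, hr⟩ | hinf
        · rw [← List.cons_append, List.append_eq_append_iff] at hr
          rcases hr with ⟨a', ha1, ha2⟩ | ⟨c', hc1, hc2⟩
          · exfalso
            have : 0 < (m.map ρ).sum := by
              apply List.sum_pos
              · intro z hz
                rw [List.mem_map] at hz
                obtain ⟨x, hx, rfl⟩ := hz
                exact hX' x (by rw [ha1]; simp [hx])
              · simpa using hm
            omega
          · by_cases hr0 : r = []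
            · rw [hc1, hc2, hr0]; simp
            · exfalso
              have h7 : ∀ r : List G, r ≠ [] → (∀ x ∈ r, ρ x < 0) → (r.map ρ).sum < 0 := by
                intro r hr0 hr1
                have : 0 < (r.map (fun x => - ρ x)).sum := by
                  apply List.sum_pos
                  · intro z hz
                    rw [List.mem_map] at hz
                    obtain ⟨x, hx, rfl⟩ := hz
                    have := hr1 x hx
                    omega
                  · simpa using hr0
                have h8 : (r.map (fun x => - ρ x)).sum = - (r.map ρ).sum := by
                  rw [my_sum_map_neg]
                omega
              have h8 := h7 r hr0 (fun x hx => hY x (by rw [hc2]; simp [hx]))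
              rw [hc1] at hs
              rw [hc2] at hsum'
              simp only [List.map_append, List.sum_append, List.map_cons, List.sum_cons] at hs hsum'
              omega
        · exfalso
          have h1 := hg m hm hinf hs
          rw [← h1, hs] at hsum'
          rcases hp2 with h2 | h2
          · rw [h2] at hfs
            simp at hfs
            rw [h1, hfs.1, hfs.2] at hm
            simp at hm
          · omega
    intro A ρ hA h0 hinj
    rcases le_or_gt 0 (∑ x ∈ A, ρ x) with h | h
    · exact main A ρ hA h0 hinj h
    · obtain ⟨X, Y, hX, hY, hnd, hfs, hg⟩ := main A (fun x => - ρ x) hA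
        (fun x hx => neg_ne_zero.2 (h0 x hx)) (fun x hx y hy hxy => hinj hx hy (neg_injective hxy))
        (by rw [Finset.sum_neg_distrib]; omega)
      refine ⟨Y.reverse, X.reverse, ?_, ?_, ?_, ?_, ?_⟩
      · intro x hx
        have := hY x (by simpa using hx)
        omega
      · intro x hx
        have := hX x (by simpa using hx)
        omega
      · rw [← List.reverse_append, List.nodup_reverse]; exact hnd
      · rw [← List.reverse_append, List.toFinset_reverse]; exact hfs
      · rw [← List.reverse_append]
        intro m hm hinf hs
        have := hg m.reverse (by simpa using hm) (by rw [← List.reverse_infix]; simpa using hinf) ?_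
        · rw [← this, List.reverse_reverse]
        · rw [my_sum_map_neg, List.map_reverse, List.sum_reverse, hs]; simp

theorem RectOn.ne_zero {G : Type*} [AddCommGroup G] {A : Finset G} {ρ : G → ℤ} (hr : RectOn A ρ)
    (h0 : (0 : G) ∉ A) : ∀ x ∈ A, ρ x ≠ 0 := by
  intro x hx h
  have := (hr {x} (by simpa using hx) ∅ (by simp)).2 (by simpa using h)
  simp at this
  exact h0 (this ▸ hx)

theorem RectOn.injOn {G : Type*} [AddCommGroup G] {A : Finset G} {ρ : G → ℤ} (hr : RectOn A ρ) :
    Set.InjOn ρ (A : Set G) := by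
  intro x hx y hy h
  have := (hr {x} (by simpa using hx) {y} (by simpa using hy)).2 (by simpa using h)
  simpa using this

theorem seq_of_rect {G : Type*} [AddCommGroup G] [DecidableEq G] (A : Finset G) (ρ : G → ℤ)
    (hr : RectOn A ρ) (h0 : (0 : G) ∉ A) : Sequenceable A := by
  obtain ⟨X, Y, -, -, hnd, hfs, hg⟩ := rect_core A.card A ρ rfl (hr.ne_zero h0) hr.injOn
  refine seq_of_list A (X ++ Y) hnd hfs ?_
  generalize X ++ Y = L at *
  intro i j hij hj hor heq
  have hsplit : L.take j = L.take i ++ (L.drop i).take (j - i) := by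
    rw [← List.take_add]; congr 1; omega
  set m := (L.drop i).take (j - i) with hm
  have hml : m.length = j - i := by rw [hm, List.length_take, List.length_drop]; omega
  have hinf : m <:+: L := (List.take_prefix _ _).isInfix.trans (List.drop_suffix _ _).isInfix
  have hms : m.sum = 0 := by
    rw [hsplit, List.sum_append] at heq
    simpa using heq
  have h1 := (hr.list m [] (hnd.sublist hinf.sublist) (by simp)
    (fun x hx => by rw [← hfs]; simpa using hinf.subset hx) (by simp)).1 (by simpa using hms)
  have h2 := hg m (by intro h; rw [h] at hml; simp at hml; omega) hinf (by simpa using h1)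
  rw [h2] at hml
  omega


def DissF {G : Type*} [AddCommGroup G] (B : Finset G) : Prop :=
  ∀ F ⊆ B, ∀ F' ⊆ B, ∑ x ∈ F, x = ∑ x ∈ F', x → F = F'

def Spn {G : Type*} [AddCommGroup G] (B : Finset G) (e : G) : Prop :=
  ∃ ε : G → ℤ, (∀ b, |ε b| ≤ 1) ∧ e = ∑ b ∈ B, ε b • b

theorem Spn.mono {G : Type*} [AddCommGroup G] [DecidableEq G] {B B' : Finset G} {e : G} (h : Spn B e)
    (hB : B ⊆ B') : Spn B' e := by
  obtain ⟨ε, h1, h2⟩ := h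
  refine ⟨fun b => if b ∈ B then ε b else 0, ?_, ?_⟩
  · intro b
    simp only
    split_ifs
    · exact h1 b
    · simp
  · rw [h2]
    simp only [ite_smul, zero_smul, Finset.sum_ite_mem]
    rw [Finset.inter_eq_right.2 hB]

theorem Spn.of_mem {G : Type*} [AddCommGroup G] [DecidableEq G] {B : Finset G} {e : G}
    (h : e ∈ B) : Spn B e := by
  refine ⟨fun b => if b = e then 1 else 0, ?_, ?_⟩
  · intro b; simp only; split_ifs <;> simp
  · simp [ite_smul, h]

theorem exists_span {G : Type*} [AddCommGroup G] [DecidableEq G] (E : Finset G) (R : ℕ)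
    (hE : ∀ D ⊆ E, DissF D → D.card ≠ R) : ∃ B ⊆ E, B.card ≤ R ∧ ∀ e ∈ E, Spn B e := by
  classical
  have hne : (E.powerset.filter (fun B => DissF B)).Nonempty := by
    refine ⟨∅, ?_⟩
    simp only [Finset.mem_filter, Finset.mem_powerset, Finset.empty_subset, true_and]
    intro F hF F' hF' _
    rw [Finset.subset_empty] at hF hF'
    rw [hF, hF']
  obtain ⟨B, hB, hmax⟩ := Finset.exists_max_image _ Finset.card hne
  simp only [Finset.mem_filter, Finset.mem_powerset] at hB hmax
  refine ⟨B, hB.1, ?_, ?_⟩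
  · by_contra hcon
    push Not at hcon
    obtain ⟨D, hD, hDc⟩ := Finset.exists_subset_card_eq hcon.le
    exact hE D (hD.trans hB.1) (fun F hF F' hF' h => hB.2 F (hF.trans hD) F' (hF'.trans hD) h) hDc
  · intro e he
    by_cases heB : e ∈ B
    · exact Spn.of_mem heB
    have h1 : ¬ DissF (insert e B) := by
      intro h
      have := hmax (insert e B) ⟨Finset.insert_subset he hB.1, h⟩
      rw [Finset.card_insert_of_notMem heB] at this
      omega
    unfold DissF at h1
    push Not at h1
    obtain ⟨F, hF, F', hF', hs, hn⟩ := h1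
    have key : ∀ F ⊆ insert e B, ∀ F' ⊆ insert e B, ∑ x ∈ F, x = ∑ x ∈ F', x → e ∈ F → e ∉ F' →
        Spn B e := by
      intro F hF F' hF' hs h1 h2
      have hF2 : F.erase e ⊆ B := by
        intro x hx
        rw [Finset.mem_erase] at hx
        exact (Finset.mem_insert.1 (hF hx.2)).resolve_left hx.1
      have hF'2 : F' ⊆ B := by
        intro x hx
        exact (Finset.mem_insert.1 (hF' hx)).resolve_left (fun h => h2 (h ▸ hx))
      refine ⟨fun b => (if b ∈ F' then 1 else 0) - (if b ∈ F.erase e then 1 else 0), ?_, ?_⟩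
      · intro b; simp only; split_ifs <;> simp
      · simp only [sub_smul, ite_smul, one_smul, zero_smul, Finset.sum_sub_distrib,
          Finset.sum_ite_mem]
        rw [Finset.inter_eq_right.2 hF2, Finset.inter_eq_right.2 hF'2, ← hs,
          Finset.sum_erase_eq_sub h1]
        abel
    by_cases h1 : e ∈ F <;> by_cases h2 : e ∈ F'
    · exfalso
      apply hn
      have := hB.2 (F.erase e) ?_ (F'.erase e) ?_ ?_
      · rw [← Finset.insert_erase h1, this, Finset.insert_erase h2]
      · intro x hx
        rw [Finset.mem_erase] at hx
        exact (Finset.mem_insert.1 (hF hx.2)).resolve_left hx.1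
      · intro x hx
        rw [Finset.mem_erase] at hx
        exact (Finset.mem_insert.1 (hF' hx.2)).resolve_left hx.1
      · rw [Finset.sum_erase_eq_sub h1, Finset.sum_erase_eq_sub h2, hs]
    · exact key F hF F' hF' hs h1 h2
    · exact key F' hF' F hF hs.symm h2 h1
    · exfalso
      apply hn
      refine hB.2 F ?_ F' ?_ hs
      · intro x hx
        exact (Finset.mem_insert.1 (hF hx)).resolve_left (fun h => h1 (h ▸ hx))
      · intro x hx
        exact (Finset.mem_insert.1 (hF' hx)).resolve_left (fun h => h2 (h ▸ hx))

theorem decomp {G : Type*} [AddCommGroup G] [DecidableEq G] (R : ℕ) (hR : 1 ≤ R) (n : ℕ) :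
    ∀ A : Finset G, A.card = n → ∃ (s : ℕ) (d : Fin s → Fin R → G) (E : Finset G),
      (∀ l, Dissoc (d l)) ∧ Function.Injective (fun p : Fin s × Fin R => d p.1 p.2) ∧
      (∀ l t, d l t ∉ E) ∧ A = E ∪ Finset.univ.image (fun p : Fin s × Fin R => d p.1 p.2) ∧
      ∀ D ⊆ E, DissF D → D.card ≠ R := by
  induction n using Nat.strong_induction_on with
  | _ n ih =>
  intro A hA
  by_cases h : ∃ D ⊆ A, DissF D ∧ D.card = R
  swap
  · push Not at h
    refine ⟨0, fun l => l.elim0, A, fun l => l.elim0, fun p => p.1.elim0, fun l => l.elim0, ?_, h⟩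
    ext x; simp
  obtain ⟨D, hDA, hD, hDc⟩ := h
  have hlt : (A \ D).card < n := by
    rw [Finset.card_sdiff_of_subset hDA]
    have := Finset.card_le_card hDA
    omega
  obtain ⟨s, d, E, h1, h2, h3, h4, h5⟩ := ih _ hlt (A \ D) rfl
  let e : Fin R ≃ {x // x ∈ D} := (D.equivFinOfCardEq hDc).symm
  let d0 : Fin R → G := fun t => (e t).1
  have hd0 : ∀ x, x ∈ D ↔ ∃ t, d0 t = x := by
    intro x
    constructor
    · intro hx; exact ⟨e.symm ⟨x, hx⟩, by simp [d0]⟩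
    · rintro ⟨t, rfl⟩; exact (e t).2
  have hd0i : Function.Injective d0 := fun a b hab => e.injective (Subtype.ext hab)
  have hmem : ∀ l t, d l t ∈ A \ D := by
    intro l t
    rw [h4]
    apply Finset.mem_union_right
    simp only [Finset.mem_image, Finset.mem_univ, true_and]
    exact ⟨(l, t), rfl⟩
  have hEm : ∀ x ∈ E, x ∉ D := by
    intro x hx
    have : x ∈ A \ D := by rw [h4]; exact Finset.mem_union_left _ hx
    exact (Finset.mem_sdiff.1 this).2
  refine ⟨s + 1, Fin.cons d0 d, E, ?_, ?_, ?_, ?_, h5⟩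
  · intro l
    refine Fin.cases ?_ (fun l => ?_) l
    · rw [Fin.cons_zero]
      intro F F' hFF
      have := hD (F.map ⟨d0, hd0i⟩) ?_ (F'.map ⟨d0, hd0i⟩) ?_ ?_
      · exact Finset.map_injective _ this
      · intro x hx
        rw [Finset.mem_map] at hx
        obtain ⟨t, _, rfl⟩ := hx
        exact (hd0 _).2 ⟨t, rfl⟩
      · intro x hx
        rw [Finset.mem_map] at hx
        obtain ⟨t, _, rfl⟩ := hx
        exact (hd0 _).2 ⟨t, rfl⟩
      · rw [Finset.sum_map, Finset.sum_map]; exact hFF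
    · rw [Fin.cons_succ]; exact h1 l
  · rintro ⟨l, t⟩ ⟨l', t'⟩
    refine Fin.cases ?_ (fun l => ?_) l <;> refine Fin.cases ?_ (fun l' => ?_) l'
    · simp only [Fin.cons_zero]; intro h; rw [hd0i h]
    · simp only [Fin.cons_zero, Fin.cons_succ]; intro h
      exact absurd ((hd0 _).2 ⟨t, h⟩) (Finset.mem_sdiff.1 (hmem l' t')).2
    · simp only [Fin.cons_zero, Fin.cons_succ]; intro h
      exact absurd ((hd0 _).2 ⟨t', h.symm⟩) (Finset.mem_sdiff.1 (hmem l t)).2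
    · simp only [Fin.cons_succ]; intro h
      have := h2 (a₁ := (l, t)) (a₂ := (l', t')) h
      simp only [Prod.mk.injEq] at this
      rw [this.1, this.2]
  · intro l t
    refine Fin.cases ?_ (fun l => ?_) l
    · rw [Fin.cons_zero]; exact fun h => hEm _ h ((hd0 _).2 ⟨t, rfl⟩)
    · rw [Fin.cons_succ]; exact h3 l t
  · ext x
    have hx : x ∈ A ↔ x ∈ A \ D ∨ x ∈ D := by
      rw [Finset.mem_sdiff]
      have := @hDA x
      tauto
    rw [hx, h4, hd0]
    simp only [Finset.mem_union, Finset.mem_image, Finset.mem_univ, true_and, Prod.exists,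
      Fin.exists_fin_succ, Fin.cons_zero, Fin.cons_succ]
    rw [or_assoc, or_comm (a := ∃ a b, d a b = x)]

theorem rectify (k n D Q : ℕ) (hk : 2 ≤ k) (B E : Finset (ZMod k)) (hB : B.card ≤ D)
    (hE : E.card ≤ n) (hQ : 2 * n * D < Q) (hp : Q ^ D < k.minFac)
    (hS : ∀ e ∈ E, Spn B e) : ∃ ρ : ZMod k → ℤ, RectOn E ρ := by
  classical
  have : NeZero k := ⟨by omega⟩
  have hQ0 : 0 < Q := by omega
  have hcol : ∀ (a : ZMod k), Q * a.val / k < Q := by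
    intro a
    rw [Nat.div_lt_iff_lt_mul (by omega)]
    exact Nat.mul_lt_mul_of_pos_left (ZMod.val_lt a) hQ0
  let col : Fin k.minFac → ({b // b ∈ B} → Fin Q) := fun lam b =>
    ⟨Q * ((lam.val : ZMod k) * b.1).val / k, hcol _⟩
  have hcard : Fintype.card ({b // b ∈ B} → Fin Q) < Fintype.card (Fin k.minFac) := by
    simp only [Fintype.card_fun, Fintype.card_fin, Fintype.card_coe]
    exact lt_of_le_of_lt (Nat.pow_le_pow_right hQ0 hB) hp
  obtain ⟨l1', l2', hne', hcoleq'⟩ := Fintype.exists_ne_map_eq_of_card_lt col hcard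
  obtain ⟨l1, l2, hlt, hcoleq⟩ : ∃ l1 l2 : Fin k.minFac, l1 < l2 ∧ col l1 = col l2 := by
    rcases lt_or_gt_of_ne hne' with h | h
    · exact ⟨l1', l2', h, hcoleq'⟩
    · exact ⟨l2', l1', h, hcoleq'.symm⟩
  set μ : ℕ := l2.val - l1.val with hμ
  have hμ1 : 0 < μ := by have : l1.val < l2.val := hlt; omega
  have hμ2 : μ < k.minFac := by have := l2.2; omega
  have hcop : Nat.Coprime μ k := by
    by_contra hcon
    obtain ⟨q, hq, hq1, hq2⟩ := Nat.Prime.not_coprime_iff_dvd.1 hcon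
    have := Nat.minFac_le_of_dvd hq.two_le hq2
    have := Nat.le_of_dvd hμ1 hq1
    omega
  have hunit : IsUnit (μ : ZMod k) := (ZMod.isUnit_iff_coprime μ k).2 hcop
  have hμc : (μ : ZMod k) = (l2.val : ZMod k) - (l1.val : ZMod k) := by
    rw [hμ, Nat.cast_sub (le_of_lt hlt)]
  let r : ZMod k → ℤ := fun b =>
    (((l2.val : ZMod k) * b).val : ℤ) - (((l1.val : ZMod k) * b).val : ℤ)
  have hr1 : ∀ b, ((r b : ℤ) : ZMod k) = (μ : ZMod k) * b := by
    intro b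
    simp only [r]
    rw [Int.cast_sub, Int.cast_natCast, Int.cast_natCast, ZMod.natCast_zmod_val,
      ZMod.natCast_zmod_val, hμc]; ring
  have hr2 : ∀ b ∈ B, Q * |r b| ≤ k := by
    intro b hb
    have h1 := congrArg Fin.val (congrFun hcoleq ⟨b, hb⟩)
    simp only [col] at h1
    have h2 : ∀ a c : ℕ, Q * a / k = Q * c / k → (Q : ℤ) * (c - a) ≤ k := by
      intro a c h
      have e1 := Nat.div_add_mod (Q * a) k
      have e2 := Nat.div_add_mod (Q * c) k
      have e3 := Nat.mod_lt (Q * c) (by omega : k > 0)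
      rw [h] at e1
      zify at e1 e2 e3
      have : (0 : ℤ) ≤ (Q : ℤ) * a % k := Int.emod_nonneg _ (by omega)
      linarith
    simp only [r]
    rcases abs_cases ((((l2.val : ZMod k) * b).val : ℤ) - (((l1.val : ZMod k) * b).val : ℤ)) with h | h
    · rw [h.1]; exact h2 _ _ h1
    · rw [h.1, neg_sub]; exact h2 _ _ h1.symm
  choose! ε hε1 hε2 using hS
  let ρ : ZMod k → ℤ := fun e => ∑ b ∈ B, ε e b * r b
  have hρ1 : ∀ e ∈ E, ((ρ e : ℤ) : ZMod k) = (μ : ZMod k) * e := by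
    intro e he
    conv_rhs => rw [hε2 e he]
    simp only [ρ, Int.cast_sum, Int.cast_mul, hr1, Finset.mul_sum, zsmul_eq_mul]
    exact Finset.sum_congr rfl (fun b _ => by ring)
  have hρ2 : ∀ e ∈ E, Q * |ρ e| ≤ D * k := by
    intro e he
    calc (Q : ℤ) * |ρ e| ≤ Q * ∑ b ∈ B, |ε e b * r b| := by
          apply mul_le_mul_of_nonneg_left (Finset.abs_sum_le_sum_abs _ _) (by positivity)
      _ = ∑ b ∈ B, |ε e b| * (Q * |r b|) := by
          rw [Finset.mul_sum]; exact Finset.sum_congr rfl (fun b _ => by rw [abs_mul]; ring)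
      _ ≤ ∑ b ∈ B, (k : ℤ) := by
          apply Finset.sum_le_sum
          intro b hb
          have h1 := hε1 e he b
          have h2 := hr2 b hb
          have h3 : (0 : ℤ) ≤ Q * |r b| := by positivity
          nlinarith
      _ = B.card * k := by simp
      _ ≤ D * k := by
          have : (B.card : ℤ) ≤ D := by exact_mod_cast hB
          nlinarith
  have hF1 : ∀ F ⊆ E, ((∑ x ∈ F, ρ x : ℤ) : ZMod k) = (μ : ZMod k) * ∑ x ∈ F, x := by
    intro F hF
    rw [Int.cast_sum, Finset.mul_sum]
    exact Finset.sum_congr rfl (fun x hx => hρ1 x (hF hx))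
  have hF2 : ∀ F ⊆ E, Q * |∑ x ∈ F, ρ x| ≤ n * D * k := by
    intro F hF
    calc (Q : ℤ) * |∑ x ∈ F, ρ x| ≤ Q * ∑ x ∈ F, |ρ x| := by
          apply mul_le_mul_of_nonneg_left (Finset.abs_sum_le_sum_abs _ _) (by positivity)
      _ = ∑ x ∈ F, Q * |ρ x| := by rw [Finset.mul_sum]
      _ ≤ ∑ x ∈ F, (D * k : ℤ) := Finset.sum_le_sum (fun x hx => hρ2 x (hF hx))
      _ = F.card * (D * k) := by simp
      _ ≤ n * (D * k) := by
          have : (F.card : ℤ) ≤ n := by exact_mod_cast (Finset.card_le_card hF).trans hE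
          have h0 : (0 : ℤ) ≤ D * k := by positivity
          nlinarith
      _ = _ := by ring
  refine ⟨ρ, ?_⟩
  intro F hF F' hF'
  constructor
  · intro h
    have h1 : ((∑ x ∈ F, ρ x - ∑ x ∈ F', ρ x : ℤ) : ZMod k) = 0 := by
      rw [Int.cast_sub, hF1 F hF, hF1 F' hF', h, sub_self]
    rw [ZMod.intCast_zmod_eq_zero_iff_dvd] at h1
    have h2 : |∑ x ∈ F, ρ x - ∑ x ∈ F', ρ x| < k := by
      have a1 := hF2 F hF
      have a2 := hF2 F' hF'
      have a3 := abs_sub (∑ x ∈ F, ρ x) (∑ x ∈ F', ρ x)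
      have a4 : (2 * n * D : ℤ) < Q := by exact_mod_cast hQ
      have a5 : (0 : ℤ) < Q := by exact_mod_cast hQ0
      have a6 : (0 : ℤ) < k := by omega
      have : (Q : ℤ) * |∑ x ∈ F, ρ x - ∑ x ∈ F', ρ x| < Q * k := by
        calc _ ≤ (Q : ℤ) * (|∑ x ∈ F, ρ x| + |∑ x ∈ F', ρ x|) := mul_le_mul_of_nonneg_left a3 a5.le
          _ ≤ 2 * n * D * k := by linarith
          _ < _ := mul_lt_mul_of_pos_right a4 a6
      exact lt_of_mul_lt_mul_left this a5.le
    have := Int.eq_zero_of_abs_lt_dvd h1 h2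
    omega
  · intro h
    have h1 := hF1 F hF
    rw [h, hF1 F' hF'] at h1
    exact (hunit.mul_left_cancel h1).symm


def Inn (X xp Y yp Z zp : ℕ) : Prop :=
  (X < Z ∨ X = Z ∧ xp ≤ zp) ∧ (Z < Y ∨ Z = Y ∧ zp ≤ yp)

def seg (R a u : ℕ) : Finset (Fin R) := Finset.univ.filter (fun t => a ≤ t.val ∧ t.val < a + u)

theorem card_seg (R a u : ℕ) (h : a + u ≤ R) : (seg R a u).card = u := by
  have : (seg R a u).map Fin.valEmbedding = Finset.Ico a (a + u) := by
    ext x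
    simp only [seg, Finset.mem_map, Finset.mem_filter, Finset.mem_univ, true_and,
      Fin.valEmbedding_apply, Finset.mem_Ico]
    constructor
    · rintro ⟨t, ht, rfl⟩; exact ht
    · intro hx; exact ⟨⟨x, by omega⟩, hx, rfl⟩
  rw [← Finset.card_map Fin.valEmbedding, this]; simp

def pfx {G : Type*} [AddCommGroup G] {b : ℕ} (a : Fin b → G) (i : ℕ) : G :=
  ∑ t : Fin b with t.val < i, a t

theorem sum_pfx {G : Type*} [AddCommGroup G] {b : ℕ} (a : Fin b → G) (lo hi : ℕ) (h : lo ≤ hi) :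
    ∑ t : Fin b with lo ≤ t.val ∧ t.val < hi, a t = pfx a hi - pfx a lo := by
  unfold pfx
  have : (Finset.univ.filter (fun t : Fin b => t.val < hi)) =
      (Finset.univ.filter (fun t : Fin b => lo ≤ t.val ∧ t.val < hi)) ∪
      (Finset.univ.filter (fun t : Fin b => t.val < lo)) := by
    ext t; simp; omega
  rw [this, Finset.sum_union]
  · simp
  · rw [Finset.disjoint_left]; intro t; simp; omega

def aval {G : Type*} {b0 b1 s R : ℕ} (a0 : Fin b0 → G) (a1 : Fin b1 → G) (dd : Fin s → Fin R → G) :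
    (Fin b0 ⊕ Fin b1) ⊕ (Fin s × Fin R) → G :=
  Sum.elim (Sum.elim a0 a1) (fun p => dd p.1 p.2)

theorem evs {G : Type*} [AddCommGroup G] {b0 b1 s R : ℕ} (a0 : Fin b0 → G) (a1 : Fin b1 → G)
    (dd : Fin s → Fin R → G) (P : (Fin b0 ⊕ Fin b1) ⊕ (Fin s × Fin R) → Prop) [DecidablePred P]
    (l1 l2 : Fin s) (hl : l1.val ≠ l2.val) (lo0 hi0 lo1 hi1 A1 u1 A2 u2 : ℕ) (h0 : lo0 ≤ hi0) (h1 : lo1 ≤ hi1)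
    (hP0 : ∀ i : Fin b0, P (.inl (.inl i)) ↔ lo0 ≤ i.val ∧ i.val < hi0)
    (hP1 : ∀ i : Fin b1, P (.inl (.inr i)) ↔ lo1 ≤ i.val ∧ i.val < hi1)
    (hPD : ∀ (l : Fin s) (t : Fin R), P (.inr (l, t)) ↔
      (l.val = l1.val ∧ A1 ≤ t.val ∧ t.val < A1 + u1) ∨ (l.val = l2.val ∧ A2 ≤ t.val ∧ t.val < A2 + u2)) :
    ∑ z with P z, aval a0 a1 dd z = (pfx a0 hi0 - pfx a0 lo0) + (pfx a1 hi1 - pfx a1 lo1) +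
      (∑ t ∈ seg R A1 u1, dd l1 t + ∑ t ∈ seg R A2 u2, dd l2 t) := by
  rw [Finset.sum_filter, Fintype.sum_sum_type, Fintype.sum_sum_type, Fintype.sum_prod_type]
  congr 1
  · congr 1
    · rw [← sum_pfx a0 lo0 hi0 h0, Finset.sum_filter]
      apply Finset.sum_congr rfl
      intro i _
      simp only [hP0, aval, Sum.elim_inl]
    · rw [← sum_pfx a1 lo1 hi1 h1, Finset.sum_filter]
      apply Finset.sum_congr rfl
      intro i _
      simp only [hP1, aval, Sum.elim_inl, Sum.elim_inr]
  · have hne : l1 ≠ l2 := fun h => hl (by rw [h])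
    rw [Fintype.sum_eq_add l1 l2 hne]
    · congr 1
      · rw [seg, Finset.sum_filter]
        apply Finset.sum_congr rfl
        intro t _
        simp only [hPD, aval, Sum.elim_inr]
        congr 1
        apply propext
        constructor
        · rintro (⟨_, h⟩ | ⟨h, _⟩)
          · exact h
          · exact absurd h hl
        · exact fun h => Or.inl ⟨by simp, h⟩
      · rw [seg, Finset.sum_filter]
        apply Finset.sum_congr rfl
        intro t _
        simp only [hPD, aval, Sum.elim_inr]
        congr 1
        apply propext
        constructor
        · rintro (⟨h, _⟩ | ⟨_, h⟩)
          · exact absurd h.symm hl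
          · exact h
        · exact fun h => Or.inr ⟨by simp, h⟩
    · intro l hl'
      apply Finset.sum_eq_zero
      intro t _
      rw [if_neg]
      rw [hPD]
      have e1 : l.val ≠ l1.val := fun h => hl'.1 (Fin.ext h)
      have e2 : l.val ≠ l2.val := fun h => hl'.2 (Fin.ext h)
      omega

theorem det_core {G : Type*} [AddCommGroup G] {b0 b1 s h T : ℕ} (hs : 2 ≤ s) (hT : 1 ≤ T)
    (hh : 2 * T ≤ h) (a0 : Fin b0 → G) (a1 : Fin b1 → G) (dd : Fin s → Fin (2 * h) → G)
    (hdd : ∀ l, Dissoc (dd l)) (σ : G) (hσ : σ = ∑ z, aval a0 a1 dd z)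
    (hN : ∀ i j, i < j → j ≤ b0 → pfx a0 i ≠ pfx a0 j)
    (hP : ∀ i j, i < j → j ≤ b1 → pfx a1 i ≠ pfx a1 j)
    (hNσ : ∀ i, 0 < i → i ≤ b0 → pfx a0 i ≠ σ)
    (S : Fin s → ℕ → ℕ → G) (hS : ∀ l A u, S l A u = ∑ t ∈ seg (2 * h) A u, dd l t)
    (fst lst : Fin s) (hfst : fst.val = 0) (hlst : lst.val = s - 1)
    (c5 : ∀ v, 1 ≤ v → v < T → ∀ i, i < b0 → S fst 0 v ≠ pfx a0 i - pfx a0 b0)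
    (c5' : ∀ v, 1 ≤ v → v < T → S fst 0 v ≠ σ - pfx a0 b0)
    (c3 : ∀ v, 1 ≤ v → v < T → ∀ i, i < b1 → S fst h v ≠ pfx a1 i - pfx a1 b1)
    (c4 : ∀ u, 1 ≤ u → u < T → ∀ i, 0 < i → i ≤ b1 → S lst (h - u) u ≠ - pfx a1 i)
    (c6 : ∀ u, 1 ≤ u → u < T → ∀ i, i ≤ b0 → S lst (2 * h - u) u ≠ σ - pfx a0 i)
    (cA : ∀ l l' : Fin s, l'.val = l.val + 1 → ∀ u v, 1 ≤ u → u < T → 1 ≤ v → v < T →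
      S l (h - u) u + S l' 0 v ≠ 0)
    (cB : ∀ l l' : Fin s, l'.val = l.val + 1 → ∀ u v, 1 ≤ u → u < T → 1 ≤ v → v < T →
      S l (2 * h - u) u + S l' h v ≠ 0)
    (c2 : ∀ u v, 1 ≤ u → u < T → 1 ≤ v → v < T → S lst (h - u) u + S fst h v ≠ - pfx a1 b1)
    (c1 : ∀ u v, 1 ≤ u → u < T → 1 ≤ v → v < T → S lst (2 * h - u) u + S fst 0 v ≠ σ - pfx a0 b0)
    (X xp Y yp : ℕ) (hXY : X < Y ∨ X = Y ∧ xp ≤ yp)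
    (hX : (X = 0 ∧ xp < b0) ∨ (X = s + 1 ∧ xp < b1) ∨ (∃ i : Fin s, X = 1 + i.val ∧ xp < h) ∨
      (∃ i : Fin s, X = s + 2 + i.val ∧ xp < h))
    (hY : (Y = 0 ∧ yp < b0) ∨ (Y = s + 1 ∧ yp < b1) ∨ (∃ i : Fin s, Y = 1 + i.val ∧ yp < h) ∨
      (∃ i : Fin s, Y = s + 2 + i.val ∧ yp < h))
    (P : (Fin b0 ⊕ Fin b1) ⊕ (Fin s × Fin (2 * h)) → Prop) [DecidablePred P]
    (hP0 : ∀ i : Fin b0, P (.inl (.inl i)) ↔ Inn X xp Y yp 0 i.val)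
    (hP1 : ∀ i : Fin b1, P (.inl (.inr i)) ↔ Inn X xp Y yp (s + 1) i.val)
    (hPD : ∀ (l : Fin s) (t : Fin (2 * h)), P (.inr (l, t)) ↔
      (t.val < h ∧ Inn X xp Y yp (1 + l.val) t.val) ∨
      (h ≤ t.val ∧ Inn X xp Y yp (s + 2 + l.val) (t.val - h)))
    (hng : ∀ k : Fin s, (Finset.univ.filter (fun t => P (.inr (k, t)))).card < T ∨
      2 * h - T < (Finset.univ.filter (fun t => P (.inr (k, t)))).card)
    (hsum : ∑ z with P z, aval a0 a1 dd z = 0) : ∀ z, P z := by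
  unfold Inn at *
  have hgen : ∀ (k : Fin s) (lo hi : ℕ), lo ≤ hi → hi ≤ 2 * h →
      (∀ t : Fin (2 * h), P (.inr (k, t)) ↔ lo ≤ t.val ∧ t.val < hi) →
      (hi - lo < T ∨ 2 * h - T < hi - lo) := by
    intro k lo hi h1 h2 h3
    have h4 := hng k
    have h5 : (Finset.univ.filter (fun t => P (.inr (k, t)))) = seg (2 * h) lo (hi - lo) := by
      unfold seg
      apply Finset.filter_congr
      intro t _
      rw [h3 t]
      omega
    rw [h5, card_seg _ _ _ (by omega)] at h4
    exact h4
  have hfl : fst.val ≠ lst.val := by clear hX hY hXY; omega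
  have hlf : lst.val ≠ fst.val := by omega
  have hcomp : ∑ z with ¬ P z, aval a0 a1 dd z = σ := by
    have := Finset.sum_filter_add_sum_filter_not Finset.univ P (aval a0 a1 dd)
    rw [hsum, zero_add] at this
    rw [this, hσ]
  have hp0 : ∀ (b : ℕ) (a : Fin b → G), pfx a 0 = 0 := by intro b a; simp [pfx]
  have hS0 : ∀ l A, S l A 0 = 0 := by
    intro l A
    rw [hS]
    apply Finset.sum_eq_zero
    intro t ht
    simp [seg] at ht
    omega
  have hSne : ∀ l A u, A + u ≤ 2 * h → 1 ≤ u → S l A u ≠ 0 := by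
    intro l A u h1 h2 h3
    rw [hS] at h3
    have := hdd l (seg (2*h) A u) ∅ (by simpa using h3)
    have h4 := card_seg (2*h) A u h1
    rw [this] at h4
    simp at h4
    omega
  have ev := evs a0 a1 dd P
  have evc := evs a0 a1 dd (fun z => ¬ P z)
  simp only [← hS] at ev evc
  rcases hX with ⟨hX, hxp⟩ | ⟨hX, hxp⟩ | ⟨i, hX, hxp⟩ | ⟨i, hX, hxp⟩ <;>
  rcases hY with ⟨hY, hyp⟩ | ⟨hY, hyp⟩ | ⟨j, hY, hyp⟩ | ⟨j, hY, hyp⟩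
  -- N N
  · exfalso
    have := ev fst lst hfl xp (yp+1) 0 0 0 0 0 0 (by omega) (by omega)
      (fun i => by rw [hP0]; omega) (fun i => by rw [hP1]; omega) (fun l t => by rw [hPD]; omega)
    rw [hsum, hS0, hS0] at this
    simp only [sub_self, add_zero] at this
    exact hN xp (yp+1) (by omega) (by omega) (sub_eq_zero.1 this.symm).symm
  -- N P
  · exfalso
    have := hgen fst 0 h (by omega) (by omega) (fun t => by rw [hPD]; omega)
    omega
  -- N D'
  · exfalso
    by_cases hj : j.val = fst.val
    · have h1 := hgen fst 0 (yp+1) (by omega) (by omega) (fun t => by rw [hPD]; omega)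
      have := ev fst lst hfl xp b0 0 0 0 (yp+1) 0 0 (by omega) (by omega)
        (fun i => by rw [hP0]; omega) (fun i => by rw [hP1]; omega) (fun l t => by rw [hPD]; omega)
      rw [hsum, hS0] at this
      simp only [sub_self, add_zero] at this
      refine c5 (yp+1) (by omega) (by omega) xp hxp ?_
      rw [eq_comm, ← sub_eq_zero, ← neg_eq_zero, this]; abel
    · have := hgen fst 0 h (by omega) (by omega) (fun t => by rw [hPD]; omega)
      omega
  -- N D''
  · by_cases hj : j.val = lst.val
    · have h1 := hgen lst 0 (h+yp+1) (by omega) (by omega) (fun t => by rw [hPD]; omega)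
      have := evc lst fst hlf 0 xp 0 0 (2*h-(h-1-yp)) (h-1-yp) 0 0 (by omega) (by omega)
        (fun i => by rw [hP0]; omega) (fun i => by rw [hP1]; omega) (fun l t => by rw [hPD]; omega)
      rw [hcomp, hS0, hp0, hp0] at this
      simp only [sub_self, add_zero, sub_zero] at this
      by_cases ha : h - 1 - yp = 0
      · rw [ha, hS0, add_zero] at this
        by_cases hx0 : xp = 0
        · rintro ((z | z) | ⟨l, t⟩)
          · rw [hP0]; omega
          · rw [hP1]; omega
          · rw [hPD]; omega
        · exact absurd this.symm (hNσ xp (by omega) (by omega))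
      · refine absurd ?_ (c6 (h-1-yp) (by omega) (by omega) xp (by omega))
        rw [this]; abel
    · have := hgen lst 0 h (by omega) (by omega) (fun t => by rw [hPD]; omega)
      omega
  · omega
  -- P P
  · exfalso
    have := ev fst lst hfl 0 0 xp (yp+1) 0 0 0 0 (by omega) (by omega)
      (fun i => by rw [hP0]; omega) (fun i => by rw [hP1]; omega) (fun l t => by rw [hPD]; omega)
    rw [hsum, hS0, hS0] at this
    simp only [sub_self, add_zero, zero_add] at this
    exact hP xp (yp+1) (by omega) (by omega) (sub_eq_zero.1 this.symm).symm
  · omega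
  -- P D''
  · exfalso
    by_cases hj : j.val = fst.val
    · have h1 := hgen fst h (h+yp+1) (by omega) (by omega) (fun t => by rw [hPD]; omega)
      have := ev fst lst hfl 0 0 xp b1 h (yp+1) 0 0 (by omega) (by omega)
        (fun i => by rw [hP0]; omega) (fun i => by rw [hP1]; omega) (fun l t => by rw [hPD]; omega)
      rw [hsum, hS0] at this
      simp only [sub_self, add_zero, zero_add] at this
      refine c3 (yp+1) (by omega) (by omega) xp hxp ?_
      rw [eq_comm, ← sub_eq_zero, ← neg_eq_zero, this]; abel
    · have := hgen fst h (2*h) (by omega) (by omega) (fun t => by rw [hPD]; omega)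
      omega
  · omega
  -- D' P
  · exfalso
    by_cases hi : i.val = lst.val
    · have h1 := hgen lst xp h (by omega) (by omega) (fun t => by rw [hPD]; omega)
      have := ev lst fst hlf 0 0 0 (yp+1) (h-(h-xp)) (h-xp) 0 0 (by omega) (by omega)
        (fun i => by rw [hP0]; omega) (fun i => by rw [hP1]; omega) (fun l t => by rw [hPD]; omega)
      rw [hsum, hS0, hp0 b1] at this
      simp only [sub_self, add_zero, zero_add, sub_zero] at this
      refine c4 (h-xp) (by omega) (by omega) (yp+1) (by omega) (by omega) ?_
      rw [eq_comm, ← sub_eq_zero, ← neg_eq_zero, this]; abel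
    · have := hgen lst 0 h (by omega) (by omega) (fun t => by rw [hPD]; omega)
      omega
  -- D' D'
  · exfalso
    by_cases hij : i.val = j.val
    · obtain ⟨l2, hl2⟩ : ∃ l2 : Fin s, i.val ≠ l2.val := by
        by_cases h : i.val = fst.val
        · exact ⟨lst, by omega⟩
        · exact ⟨fst, h⟩
      have := ev i l2 hl2 0 0 0 0 xp (yp+1-xp) 0 0 (by omega) (by omega)
        (fun i => by rw [hP0]; omega) (fun i => by rw [hP1]; omega) (fun l t => by rw [hPD]; omega)
      rw [hsum, hS0] at this
      simp only [sub_self, add_zero, zero_add] at this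
      exact hSne _ _ _ (by omega) (by omega) this.symm
    · by_cases hij2 : j.val = i.val + 1
      · have h1 := hgen i xp h (by omega) (by omega) (fun t => by rw [hPD]; omega)
        have h2 := hgen j 0 (yp+1) (by omega) (by omega) (fun t => by rw [hPD]; omega)
        have := ev i j hij 0 0 0 0 (h-(h-xp)) (h-xp) 0 (yp+1) (by omega) (by omega)
          (fun i => by rw [hP0]; omega) (fun i => by rw [hP1]; omega) (fun l t => by rw [hPD]; omega)
        rw [hsum] at this
        simp only [sub_self, add_zero, zero_add] at this
        exact cA i j hij2 _ _ (by omega) (by omega) (by omega) (by omega) this.symm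
      · have hlt : i.val + 1 < s := by have := j.2; omega
        have := hgen ⟨i.val+1, hlt⟩ 0 h (by omega) (by omega) (fun t => by rw [hPD]; simp only []; omega)
        omega
  -- D' D''
  · by_cases hij : i.val = j.val
    · exfalso
      by_cases hi0 : i.val = fst.val
      · have := hgen lst 0 h (by omega) (by omega) (fun t => by rw [hPD]; omega)
        omega
      · have := hgen fst h (2*h) (by omega) (by omega) (fun t => by rw [hPD]; omega)
        omega
    · by_cases hlt : i.val < j.val
      · by_cases hi0 : i.val = fst.val
        swap
        · exfalso
          have := hgen fst h (2*h) (by omega) (by omega) (fun t => by rw [hPD]; omega)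
          omega
        by_cases hj0 : j.val = lst.val
        swap
        · exfalso
          have := hgen lst 0 h (by omega) (by omega) (fun t => by rw [hPD]; omega)
          omega
        have h1 := hgen fst xp (2*h) (by omega) (by omega) (fun t => by rw [hPD]; omega)
        have h2 := hgen lst 0 (h+yp+1) (by omega) (by omega) (fun t => by rw [hPD]; omega)
        have := evc lst fst hlf 0 b0 0 0 (2*h-(h-1-yp)) (h-1-yp) 0 xp (by omega) (by omega)
          (fun i => by rw [hP0]; omega) (fun i => by rw [hP1]; omega) (fun l t => by rw [hPD]; omega)
        rw [hcomp, hp0, hp0] at this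
        simp only [sub_self, add_zero, sub_zero] at this
        by_cases ha : h - 1 - yp = 0
        · rw [ha, hS0, zero_add] at this
          by_cases hx0 : xp = 0
          · rw [hx0, hS0, add_zero] at this
            rcases Nat.eq_zero_or_pos b0 with hb | hb
            · rintro ((z | z) | ⟨l, t⟩)
              · have := z.2; omega
              · rw [hP1]; omega
              · rw [hPD]; omega
            · exact absurd this.symm (hNσ b0 hb le_rfl)
          · refine absurd ?_ (c5' xp (by omega) (by omega))
            rw [this]; abel
        · by_cases hx0 : xp = 0
          · rw [hx0, hS0, add_zero] at this
            refine absurd ?_ (c6 (h-1-yp) (by omega) (by omega) b0 (by omega))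
            rw [this]; abel
          · refine absurd ?_ (c1 (h-1-yp) xp (by omega) (by omega) (by omega) (by omega))
            rw [this]; abel
      · exfalso
        by_cases hi0 : i.val = lst.val
        swap
        · have := hgen lst 0 h (by omega) (by omega) (fun t => by rw [hPD]; omega)
          omega
        by_cases hj0 : j.val = fst.val
        swap
        · have := hgen fst h (2*h) (by omega) (by omega) (fun t => by rw [hPD]; omega)
          omega
        have h1 := hgen lst xp h (by omega) (by omega) (fun t => by rw [hPD]; omega)
        have h2 := hgen fst h (h+yp+1) (by omega) (by omega) (fun t => by rw [hPD]; omega)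
        have := ev lst fst hlf 0 0 0 b1 (h-(h-xp)) (h-xp) h (yp+1) (by omega) (by omega)
          (fun i => by rw [hP0]; omega) (fun i => by rw [hP1]; omega) (fun l t => by rw [hPD]; omega)
        rw [hsum, hp0 b1] at this
        simp only [sub_self, add_zero, zero_add, sub_zero] at this
        refine c2 (h-xp) (yp+1) (by omega) (by omega) (by omega) (by omega) ?_
        rw [eq_comm, ← sub_eq_zero, ← neg_eq_zero, this]; abel
  · omega
  · omega
  · omega
  -- D'' D''
  · exfalso
    by_cases hij : i.val = j.val
    · obtain ⟨l2, hl2⟩ : ∃ l2 : Fin s, i.val ≠ l2.val := by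
        by_cases h : i.val = fst.val
        · exact ⟨lst, by omega⟩
        · exact ⟨fst, h⟩
      have := ev i l2 hl2 0 0 0 0 (h+xp) (yp+1-xp) 0 0 (by omega) (by omega)
        (fun i => by rw [hP0]; omega) (fun i => by rw [hP1]; omega) (fun l t => by rw [hPD]; omega)
      rw [hsum, hS0] at this
      simp only [sub_self, add_zero, zero_add] at this
      exact hSne _ _ _ (by omega) (by omega) this.symm
    · by_cases hij2 : j.val = i.val + 1
      · have h1 := hgen i (h+xp) (2*h) (by omega) (by omega) (fun t => by rw [hPD]; omega)
        have h2 := hgen j h (h+yp+1) (by omega) (by omega) (fun t => by rw [hPD]; omega)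
        have := ev i j hij 0 0 0 0 (2*h-(h-xp)) (h-xp) h (yp+1) (by omega) (by omega)
          (fun i => by rw [hP0]; omega) (fun i => by rw [hP1]; omega) (fun l t => by rw [hPD]; omega)
        rw [hsum] at this
        simp only [sub_self, add_zero, zero_add] at this
        exact cB i j hij2 _ _ (by omega) (by omega) (by omega) (by omega) this.symm
      · have hlt : i.val + 1 < s := by have := j.2; omega
        have := hgen ⟨i.val+1, hlt⟩ h (2*h) (by omega) (by omega) (fun t => by rw [hPD]; simp only []; omega)
        omega


theorem natcard_le3 {S : Type*} [Finite S] (A B C D : S → Prop) (h : ∀ x, A x → B x ∨ C x ∨ D x) :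
    Nat.card {x // A x} ≤ Nat.card {x // B x} + Nat.card {x // C x} + Nat.card {x // D x} := by
  classical
  have := Fintype.ofFinite S
  simp only [Nat.card_eq_fintype_card, Fintype.card_subtype]
  refine le_trans (Finset.card_le_card ?_) ((Finset.card_union_le _ _).trans
    (Nat.add_le_add_right (Finset.card_union_le _ _) _))
  intro x hx
  have := h x (by simpa using hx)
  simp only [Finset.mem_union, Finset.mem_filter, Finset.mem_univ, true_and]
  tauto

theorem natcard_mono {S : Type*} [Finite S] (A B : S → Prop) (h : ∀ x, A x → B x) :
    Nat.card {x // A x} ≤ Nat.card {x // B x} :=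
  Nat.card_le_card_of_injective (fun x : {x // A x} => (⟨x.1, h x.1 x.2⟩ : {x // B x}))
    (fun x y hxy => by
      apply Subtype.ext
      simpa using hxy)

theorem natcard_exists {S κ : Type*} [Finite S] (Idx : Finset κ) (A : κ → S → Prop) :
    Nat.card {x // ∃ k ∈ Idx, A k x} ≤ ∑ k ∈ Idx, Nat.card {x // A k x} := by
  classical
  have := Fintype.ofFinite S
  simp only [Nat.card_eq_fintype_card, Fintype.card_subtype]
  refine le_trans (Finset.card_le_card ?_) Finset.card_biUnion_le
  intro x hx
  simpa using hx

theorem hit_count {R : ℕ} {G κ : Type*} [AddCommGroup G] (d : Fin R → G) (hd : Dissoc d)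
    (Idx : Finset κ) (I : κ → Finset (Fin R)) (c : κ → G)
    (hI : ∀ k ∈ Idx, 1 ≤ (I k).card ∧ (I k).card + 1 ≤ R) :
    R * Nat.card {π : Equiv.Perm (Fin R) // ∃ k ∈ Idx, ∑ t ∈ I k, d (π t) = c k} ≤
      Idx.card * R.factorial := by
  have h0 := natcard_exists Idx (fun k (π : Equiv.Perm (Fin R)) => ∑ t ∈ I k, d (π t) = c k)
  have h00 : ∀ k, Nat.card {π : Equiv.Perm (Fin R) // ∑ t ∈ I k, d (π t) = c k} = cnt d (I k) (c k) :=
    fun k => rfl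
  simp only [h00] at h0
  calc _ ≤ R * ∑ k ∈ Idx, cnt d (I k) (c k) := Nat.mul_le_mul_left _ h0
    _ = ∑ k ∈ Idx, R * cnt d (I k) (c k) := Finset.mul_sum _ _ _
    _ ≤ ∑ k ∈ Idx, R.factorial := by
        apply Finset.sum_le_sum
        intro k hk
        have h1 := cnt_mul_choose d hd (I k) (c k)
        have h2 := le_choose R _ (hI k hk).1 (hI k hk).2
        calc _ = cnt d (I k) (c k) * R := mul_comm _ _
          _ ≤ _ := Nat.mul_le_mul_left _ h2
          _ ≤ _ := h1
    _ = _ := by simp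

theorem Dissoc.comp_perm {ι G : Type*} [AddCommGroup G] {d : ι → G} (hd : Dissoc d)
    (π : Equiv.Perm ι) : Dissoc (fun t => d (π t)) := by
  intro F F' h
  have := hd (F.map π.toEmbedding) (F'.map π.toEmbedding) (by
    rw [Finset.sum_map, Finset.sum_map]; exact h)
  exact Finset.map_injective _ this

theorem exists_rot (s : ℕ) (hs : 2 ≤ s) : ∃ e : Equiv.Perm (Fin s),
    (∀ l : Fin s, l.val + 1 < s → (e l).val = l.val + 1) ∧
    (∀ l : Fin s, l.val = s - 1 → (e l).val = 0) := by
  obtain ⟨m, rfl⟩ : ∃ m, s = m + 1 := ⟨s - 1, by omega⟩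
  refine ⟨finRotate (m+1), ?_, ?_⟩
  · intro l hl
    rw [coe_finRotate_of_ne_last]
    intro h
    rw [h] at hl
    simp at hl
  · intro l hl
    have : l = Fin.last m := by ext; simpa using hl
    rw [this, finRotate_last]
    rfl

def sm {R : ℕ} {G : Type*} [AddCommGroup G] (d : Fin R → G) (I : Finset (Fin R))
    (π : Equiv.Perm (Fin R)) : G := ∑ t ∈ I, d (π t)

def UF {G : Type*} [AddCommGroup G] {b0 b1 R : ℕ} (h T : ℕ) (a0 : Fin b0 → G) (a1 : Fin b1 → G)
    (σ : G) (d : Fin R → G) (π : Equiv.Perm (Fin R)) : Prop :=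
  ∃ v ∈ Finset.Ico 1 T, (∃ i ∈ Finset.range b0, sm d (seg R 0 v) π = pfx a0 i - pfx a0 b0) ∨
    sm d (seg R 0 v) π = σ - pfx a0 b0 ∨
    ∃ i ∈ Finset.range b1, sm d (seg R h v) π = pfx a1 i - pfx a1 b1

def UL {G : Type*} [AddCommGroup G] {b0 b1 R : ℕ} (h T : ℕ) (a0 : Fin b0 → G) (a1 : Fin b1 → G)
    (σ : G) (d : Fin R → G) (π : Equiv.Perm (Fin R)) : Prop :=
  ∃ u ∈ Finset.Ico 1 T, (∃ i ∈ Finset.Ico 1 (b1 + 1), sm d (seg R (h - u) u) π = - pfx a1 i) ∨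
    ∃ i ∈ Finset.range (b0 + 1), sm d (seg R (2 * h - u) u) π = σ - pfx a0 i

def so (h : ℕ) (x : Bool) (u : ℕ) : Finset (Fin (2 * h)) :=
  if x then seg (2 * h) (h - u) u else seg (2 * h) (2 * h - u) u

def si (h : ℕ) (x : Bool) (v : ℕ) : Finset (Fin (2 * h)) :=
  if x then seg (2 * h) 0 v else seg (2 * h) h v

def JJ {G : Type*} [AddCommGroup G] {s : ℕ} (h T : ℕ) (e : Equiv.Perm (Fin s)) (tg : Bool → Bool → G)
    (d : Fin s → Fin (2 * h) → G) (l l' : Fin s) (π π' : Equiv.Perm (Fin (2 * h))) : Prop :=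
  l' = e l ∧ ∃ k ∈ (Finset.Ico 1 T ×ˢ Finset.Ico 1 T) ×ˢ (Finset.univ : Finset (Bool × Bool)),
    sm (d l) (so h k.2.1 k.1.1) π + sm (d l') (si h k.2.2 k.1.2) π' = tg k.2.1 k.2.2

theorem card_so (h : ℕ) (x : Bool) (u : ℕ) (hu : u ≤ h) : (so h x u).card = u := by
  unfold so; split_ifs <;> exact card_seg _ _ _ (by omega)

theorem card_si (h : ℕ) (x : Bool) (u : ℕ) (hu : u ≤ h) : (si h x u).card = u := by
  unfold si; split_ifs <;> exact card_seg _ _ _ (by omega)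

theorem hloc_core {G : Type*} [AddCommGroup G] {s h T : ℕ} (hT : 1 ≤ T) (hh : 2 * T ≤ h)
    (hR : 16 * T ^ 2 ≤ h) (e : Equiv.Perm (Fin s)) (tg : Bool → Bool → G)
    (d : Fin s → Fin (2 * h) → G) (hd : ∀ l, Dissoc (d l))
    (U : Fin s → Equiv.Perm (Fin (2 * h)) → Prop)
    (hU : ∀ l, 4 * Nat.card {π // U l π} ≤ (2 * h).factorial) (l : Fin s)
    (ω : Fin s → Equiv.Perm (Fin (2 * h))) :
    2 * Nat.card {π // U l π ∨ ∃ l', l' ≠ l ∧ (JJ h T e tg d l l' π (ω l') ∨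
      JJ h T e tg d l' l (ω l') π)} ≤ (2 * h).factorial := by
  set Idx := (Finset.Ico 1 T ×ˢ Finset.Ico 1 T) ×ˢ (Finset.univ : Finset (Bool × Bool)) with hIdx
  have hIc : Idx.card ≤ 4 * T ^ 2 := by
    rw [hIdx, Finset.card_product, Finset.card_product]
    simp
    have : T - 1 ≤ T := by omega
    nlinarith
  have hmem : ∀ k ∈ Idx, 1 ≤ k.1.1 ∧ k.1.1 < T ∧ 1 ≤ k.1.2 ∧ k.1.2 < T := by
    intro k hk
    simp only [hIdx, Finset.mem_product, Finset.mem_Ico] at hk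
    omega
  have n1 := hit_count (d l) (hd l) Idx (fun k => so h k.2.1 k.1.1)
    (fun k => tg k.2.1 k.2.2 - sm (d (e l)) (si h k.2.2 k.1.2) (ω (e l)))
    (fun k hk => by have := hmem k hk; rw [card_so _ _ _ (by omega)]; omega)
  have n2 := hit_count (d l) (hd l) Idx (fun k => si h k.2.2 k.1.2)
    (fun k => tg k.2.1 k.2.2 - sm (d (e.symm l)) (so h k.2.1 k.1.1) (ω (e.symm l)))
    (fun k hk => by have := hmem k hk; rw [card_si _ _ _ (by omega)]; omega)
  have n3 := natcard_le3 (fun π : Equiv.Perm (Fin (2 * h)) => U l π ∨ ∃ l', l' ≠ l ∧ (JJ h T e tg d l l' π (ω l') ∨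
      JJ h T e tg d l' l (ω l') π)) (U l)
      (fun π : Equiv.Perm (Fin (2 * h)) => ∃ k ∈ Idx, ∑ t ∈ so h k.2.1 k.1.1, d l (π t) =
        tg k.2.1 k.2.2 - sm (d (e l)) (si h k.2.2 k.1.2) (ω (e l)))
      (fun π : Equiv.Perm (Fin (2 * h)) => ∃ k ∈ Idx, ∑ t ∈ si h k.2.2 k.1.2, d l (π t) =
        tg k.2.1 k.2.2 - sm (d (e.symm l)) (so h k.2.1 k.1.1) (ω (e.symm l))) (by
      rintro π (h1 | ⟨l', _, ⟨h1, k, hk, h2⟩ | ⟨h1, k, hk, h2⟩⟩)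
      · exact Or.inl h1
      · subst h1
        exact Or.inr (Or.inl ⟨k, hk, by rw [← h2]; simp [sm]⟩)
      · have : l' = e.symm l := by rw [h1]; simp
        subst this
        exact Or.inr (Or.inr ⟨k, hk, by rw [← h2]; simp [sm]⟩))
  have n4 := hU l
  generalize Nat.card {π : Equiv.Perm (Fin (2 * h)) // ∃ k ∈ Idx, ∑ t ∈ so h k.2.1 k.1.1, d l (π t) =
        tg k.2.1 k.2.2 - sm (d (e l)) (si h k.2.2 k.1.2) (ω (e l))} = N1 at n1 n3
  generalize Nat.card {π : Equiv.Perm (Fin (2 * h)) // ∃ k ∈ Idx, ∑ t ∈ si h k.2.2 k.1.2, d l (π t) =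
        tg k.2.1 k.2.2 - sm (d (e.symm l)) (so h k.2.1 k.1.1) (ω (e.symm l))} = N2 at n2 n3
  generalize (2 * h).factorial = f at *
  have hfin : ∀ N, 2 * h * N ≤ Idx.card * f → 8 * N ≤ f := by
    intro N hN
    have h1 : Idx.card * f ≤ 4 * T ^ 2 * f := Nat.mul_le_mul_right _ hIc
    have h2 : 2 * (16 * T ^ 2) * N ≤ 2 * h * N := Nat.mul_le_mul_right _ (by omega)
    have h3 : (4 * T ^ 2) * (8 * N) ≤ (4 * T ^ 2) * f := by nlinarith
    exact Nat.le_of_mul_le_mul_left h3 (by positivity)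
  have := hfin N1 n1
  have := hfin N2 n2
  omega


theorem gen_count {R T : ℕ} {G : Type*} [AddCommGroup G] (d : Fin R → G) (hd : Dissoc d)
    (I : Finset (Fin R)) (c : G) (h1 : T ≤ I.card) (h2 : I.card + T ≤ R) :
    2 ^ T * Nat.card {π : Equiv.Perm (Fin R) // ∑ t ∈ I, d (π t) = c} ≤ R.factorial := by
  have e1 := cnt_mul_choose d hd I c
  have e2 := two_pow_le_choose T R I.card h1 h2
  have e3 : Nat.card {π : Equiv.Perm (Fin R) // ∑ t ∈ I, d (π t) = c} = cnt d I c := rfl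
  rw [e3]
  calc _ = cnt d I c * 2 ^ T := mul_comm _ _
    _ ≤ _ := Nat.mul_le_mul_left _ e2
    _ ≤ _ := e1

def kX {b0 b1 s : ℕ} (h : ℕ) : (Fin b0 ⊕ Fin b1) ⊕ (Fin s × Fin (2 * h)) → ℕ
  | .inl (.inl _) => 0
  | .inl (.inr _) => s + 1
  | .inr (l, t) => if t.val < h then 1 + l.val else s + 2 + l.val

def kp {b0 b1 s : ℕ} (h : ℕ) : (Fin b0 ⊕ Fin b1) ⊕ (Fin s × Fin (2 * h)) → ℕ
  | .inl (.inl i) => i.val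
  | .inl (.inr i) => i.val
  | .inr (_, t) => if t.val < h then t.val else t.val - h

theorem key_inj {b0 b1 s h : ℕ} (x y : (Fin b0 ⊕ Fin b1) ⊕ (Fin s × Fin (2 * h)))
    (e1 : kX h x = kX h y) (e2 : kp h x = kp h y) : x = y := by
  rcases x with (x | x) | ⟨l, t⟩ <;> rcases y with (y | y) | ⟨m, r⟩ <;>
    simp only [kX, kp] at e1 e2 <;>
    (try split_ifs at e1 e2) <;> (try omega) <;>
    (try (have := Fin.ext e2; subst this; rfl)) <;>
    (have h1 : l = m := Fin.ext (by omega); have h2 : t = r := Fin.ext (by omega); rw [h1, h2])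

theorem key_form {b0 b1 s h : ℕ} (x : (Fin b0 ⊕ Fin b1) ⊕ (Fin s × Fin (2 * h))) :
    (kX h x = 0 ∧ kp h x < b0) ∨ (kX h x = s + 1 ∧ kp h x < b1) ∨
      (∃ i : Fin s, kX h x = 1 + i.val ∧ kp h x < h) ∨
      (∃ i : Fin s, kX h x = s + 2 + i.val ∧ kp h x < h) := by
  rcases x with (x | x) | ⟨l, t⟩
  · left; simp [kX, kp]
  · right; left; simp [kX, kp]
  · by_cases ht : t.val < h
    · right; right; left; exact ⟨l, by simp [kX, ht], by simp [kp, ht]⟩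
    · right; right; right; exact ⟨l, by simp [kX, ht], by simp [kp, ht]; omega⟩

theorem split_sum {G : Type*} [AddCommGroup G] {b0 b1 s R : ℕ} (a0 : Fin b0 → G) (a1 : Fin b1 → G)
    (d : Fin s → Fin R → G) (P : (Fin b0 ⊕ Fin b1) ⊕ (Fin s × Fin R) → Prop) [DecidablePred P]
    (k : Fin s) (ω : Fin s → Equiv.Perm (Fin R)) :
    ∃ c : G, ∀ π : Equiv.Perm (Fin R),
      (∑ z with P z, aval a0 a1 (fun l t => d l (Function.update ω k π l t)) z = 0 →
        ∑ t with P (.inr (k, t)), d k (π t) = c) := by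
  refine ⟨-(∑ x, (if P (.inl x) then Sum.elim a0 a1 x else 0) + ∑ l ∈ Finset.univ.erase k, ∑ t,
    if P (.inr (l, t)) then d l (ω l t) else 0), ?_⟩
  intro π hπ
  rw [Finset.sum_filter, Fintype.sum_sum_type, Fintype.sum_prod_type,
    ← Finset.add_sum_erase _ _ (Finset.mem_univ k)] at hπ
  rw [eq_neg_iff_add_eq_zero, Finset.sum_filter]
  refine Eq.trans ?_ hπ
  have : ∑ l ∈ Finset.univ.erase k, ∑ t,
      (if P (.inr (l, t)) then aval a0 a1 (fun l t => d l (Function.update ω k π l t)) (.inr (l, t)) else 0)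
      = ∑ l ∈ Finset.univ.erase k, ∑ t, if P (.inr (l, t)) then d l (ω l t) else 0 := by
    apply Finset.sum_congr rfl
    intro l hl
    rw [Finset.mem_erase] at hl
    simp [aval, Function.update_of_ne hl.1]
  rw [this]
  simp only [aval, Sum.elim_inl, Sum.elim_inr, Function.update_self]
  abel

theorem core {G : Type*} [AddCommGroup G] [DecidableEq G] {b0 b1 s h T : ℕ} (hs : 2 ≤ s) (hT : 1 ≤ T)
    (hh : 2 * T ≤ h) (hR : 16 * T ^ 2 ≤ h) (hn : 2 * (b0 + b1 + s * (2 * h)) ^ 2 < 2 ^ T)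
    (a0 : Fin b0 → G) (a1 : Fin b1 → G) (d : Fin s → Fin (2 * h) → G)
    (hd : ∀ l, Dissoc (d l)) (hinj : Function.Injective (aval a0 a1 d))
    (σ : G) (hσ : σ = ∑ z, aval a0 a1 d z)
    (hN : ∀ i j, i < j → j ≤ b0 → pfx a0 i ≠ pfx a0 j)
    (hP : ∀ i j, i < j → j ≤ b1 → pfx a1 i ≠ pfx a1 j)
    (hNσ : ∀ i, 0 < i → i ≤ b0 → pfx a0 i ≠ σ)
    (fst lst : Fin s) (hfst : fst.val = 0) (hlst : lst.val = s - 1)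
    (hUF : 4 * Nat.card {π // UF h T a0 a1 σ (d fst) π} ≤ (2 * h).factorial)
    (hUL : 4 * Nat.card {π // UL h T a0 a1 σ (d lst) π} ≤ (2 * h).factorial) :
    Sequenceable (Finset.univ.image (aval a0 a1 d)) := by
  classical
  obtain ⟨e, he1, he2⟩ := exists_rot s hs
  have hfl : fst ≠ lst := by intro h; rw [h] at hfst; omega
  let Z := (Fin b0 ⊕ Fin b1) ⊕ (Fin s × Fin (2 * h))
  let PP : Z × Z → Z → Prop := fun q z =>
    Inn (kX h q.1) (kp h q.1) (kX h q.2) (kp h q.2) (kX h z) (kp h z)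
  let I : Z × Z → Fin s → Finset (Fin (2 * h)) := fun q k =>
    Finset.univ.filter (fun t => PP q (.inr (k, t)))
  let K : Finset (Z × Z) := Finset.univ.filter (fun q => ∃ k, T ≤ (I q k).card ∧ (I q k).card + T ≤ 2 * h)
  let blk : Z × Z → Fin s := fun q =>
    if H : ∃ k, T ≤ (I q k).card ∧ (I q k).card + T ≤ 2 * h then H.choose else fst
  let tg : Bool → Bool → G := fun x y =>
    if x = y then 0 else if x then - pfx a1 b1 else σ - pfx a0 b0
  let U : Fin s → Equiv.Perm (Fin (2 * h)) → Prop := fun l π =>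
    (l = fst ∧ UF h T a0 a1 σ (d fst) π) ∨ (l = lst ∧ UL h T a0 a1 σ (d lst) π)
  have hU : ∀ l, 4 * Nat.card {π // U l π} ≤ (2 * h).factorial := by
    intro l
    by_cases h1 : l = fst
    · refine le_trans (Nat.mul_le_mul_left 4 (natcard_mono _ _ ?_)) hUF
      rintro π (h2 | h2)
      · exact h2.2
      · exact absurd (h1.symm.trans h2.1) hfl
    · refine le_trans (Nat.mul_le_mul_left 4 (natcard_mono _ _ ?_)) hUL
      rintro π (h2 | h2)
      · exact absurd h2.1 h1
      · exact h2.2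
  have hcard : Fintype.card (Equiv.Perm (Fin (2 * h))) = (2 * h).factorial := by
    rw [Fintype.card_perm, Fintype.card_fin]
  have hZ : Fintype.card Z = b0 + b1 + s * (2 * h) := by
    simp [Z]
  obtain ⟨ω, g1, g2, g3⟩ := exists_good U (JJ h T e tg d)
    (fun l ω => by rw [hcard]; exact hloc_core hT hh hR e tg d hd U hU l ω)
    K (fun q ω => ∑ z with PP q z, aval a0 a1 (fun l t => d l (ω l t)) z = 0) blk (2 ^ T)
    (by
      refine lt_of_le_of_lt ?_ hn
      have : K.card ≤ (b0 + b1 + s * (2 * h)) ^ 2 := by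
        refine (Finset.card_le_univ _).trans ?_
        rw [Fintype.card_prod, hZ, sq]
      omega)
    (by
      intro q hq ω
      have hb : T ≤ (I q (blk q)).card ∧ (I q (blk q)).card + T ≤ 2 * h := by
        have H := (Finset.mem_filter.mp hq).2
        have : blk q = H.choose := dif_pos H
        rw [this]
        exact H.choose_spec
      obtain ⟨c, hc⟩ := split_sum a0 a1 d (PP q) (blk q) ω
      rw [hcard]
      refine le_trans (Nat.mul_le_mul_left _ (natcard_mono _ _ hc)) ?_
      exact gen_count (d (blk q)) (hd _) (I q (blk q)) c hb.1 hb.2)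
  set dd : Fin s → Fin (2 * h) → G := fun l t => d l (ω l t) with hdd
  let E : Equiv.Perm Z := Equiv.sumCongr (Equiv.refl _) (Equiv.prodShear (Equiv.refl _) ω)
  have hE : aval a0 a1 dd = aval a0 a1 d ∘ E := by
    funext z
    rcases z with (z | z) | ⟨l, t⟩ <;> rfl
  have himg : Finset.univ.image (aval a0 a1 d) = Finset.univ.image (aval a0 a1 dd) := by
    rw [hE]
    ext g
    simp only [Finset.mem_image, Finset.mem_univ, true_and, Function.comp]
    constructor
    · rintro ⟨z, rfl⟩; exact ⟨E.symm z, by simp⟩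
    · rintro ⟨z, rfl⟩; exact ⟨E z, rfl⟩
  have hσ' : σ = ∑ z, aval a0 a1 dd z := by
    rw [hσ, hE]; exact (Equiv.sum_comp E (aval a0 a1 d)).symm
  rw [himg]
  let key : Z → ℕ ×ₗ ℕ := fun z => toLex (kX h z, kp h z)
  have hkey : ∀ x z, key x ≤ key z ↔ (kX h x < kX h z ∨ kX h x = kX h z ∧ kp h x ≤ kp h z) := by
    intro x z
    simp [key, Prod.Lex.toLex_le_toLex]
  refine seq_of_key key ?_ (aval a0 a1 dd) ?_ ?_
  · intro x y hxy
    have := toLex.injective hxy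
    simp only [Prod.mk.injEq] at this
    exact key_inj x y this.1 this.2
  · rw [hE]; exact hinj.comp E.injective
  intro x y hxy hsum
  have hPP : ∀ z, (key x ≤ key z ∧ key z ≤ key y) ↔ PP (x, y) z := by
    intro z; rw [hkey, hkey]; exact Iff.rfl
  simp only [hPP] at hsum ⊢
  have hng : ∀ k : Fin s, (I (x, y) k).card < T ∨ 2 * h - T < (I (x, y) k).card := by
    intro k
    by_contra hcon
    push Not at hcon
    exact g3 (x, y) (Finset.mem_filter.mpr ⟨Finset.mem_univ _, k, hcon.1, by omega⟩) hsum
  have hJ : ∀ l l', l ≠ l' → l' = e l → ∀ u v, 1 ≤ u → u < T → 1 ≤ v → v < T → ∀ x y,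
      ∑ t ∈ so h x u, dd l t + ∑ t ∈ si h y v, dd l' t ≠ tg x y := by
    intro l l' h1 h2 u v hu hu' hv hv' x y hcon
    refine g2 l l' h1 ⟨h2, ((u, v), (x, y)), ?_, hcon⟩
    simp [hu, hu', hv, hv']
  have hF : ¬ UF h T a0 a1 σ (d fst) (ω fst) := fun hc => g1 fst (Or.inl ⟨rfl, hc⟩)
  have hL : ¬ UL h T a0 a1 σ (d lst) (ω lst) := fun hc => g1 lst (Or.inr ⟨rfl, hc⟩)
  have hsucc : ∀ l l' : Fin s, l'.val = l.val + 1 → l ≠ l' ∧ l' = e l := by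
    intro l l' hl
    refine ⟨fun hc => by rw [hc] at hl; omega, Fin.ext ?_⟩
    rw [he1 l (by have := l'.2; omega), hl]
  have hwrap : lst ≠ fst ∧ fst = e lst := ⟨hfl.symm, Fin.ext (by rw [he2 lst hlst, hfst])⟩
  refine det_core hs hT hh a0 a1 dd (fun l => (hd l).comp_perm (ω l)) σ hσ' hN hP hNσ
    (fun l A u => ∑ t ∈ seg (2 * h) A u, dd l t) (fun _ _ _ => rfl) fst lst hfst hlst
    ?_ ?_ ?_ ?_ ?_ ?_ ?_ ?_ ?_ (kX h x) (kp h x) (kX h y) (kp h y) ((hkey x y).mp hxy) (key_form x)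
    (key_form y) (PP (x, y)) (fun i => Iff.rfl) (fun i => Iff.rfl) ?_ hng hsum
  · intro v hv hv' i hi hc
    exact hF ⟨v, Finset.mem_Ico.mpr ⟨hv, hv'⟩, Or.inl ⟨i, Finset.mem_range.mpr hi, hc⟩⟩
  · intro v hv hv' hc
    exact hF ⟨v, Finset.mem_Ico.mpr ⟨hv, hv'⟩, Or.inr (Or.inl hc)⟩
  · intro v hv hv' i hi hc
    exact hF ⟨v, Finset.mem_Ico.mpr ⟨hv, hv'⟩, Or.inr (Or.inr ⟨i, Finset.mem_range.mpr hi, hc⟩)⟩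
  · intro v hv hv' i hi hi' hc
    exact hL ⟨v, Finset.mem_Ico.mpr ⟨hv, hv'⟩, Or.inl ⟨i, Finset.mem_Ico.mpr ⟨hi, by omega⟩, hc⟩⟩
  · intro v hv hv' i hi hc
    exact hL ⟨v, Finset.mem_Ico.mpr ⟨hv, hv'⟩, Or.inr ⟨i, Finset.mem_range.mpr (by omega), hc⟩⟩
  · intro l l' hl u v hu hu' hv hv'
    exact hJ l l' (hsucc l l' hl).1 (hsucc l l' hl).2 u v hu hu' hv hv' true true
  · intro l l' hl u v hu hu' hv hv'
    exact hJ l l' (hsucc l l' hl).1 (hsucc l l' hl).2 u v hu hu' hv hv' false false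
  · intro u v hu hu' hv hv'
    exact hJ lst fst hwrap.1 hwrap.2 u v hu hu' hv hv' true false
  · intro u v hu hu' hv hv'
    exact hJ lst fst hwrap.1 hwrap.2 u v hu hu' hv hv' false true
  · intro l t
    show Inn _ _ _ _ (kX h (.inr (l, t))) (kp h (.inr (l, t))) ↔ _
    by_cases ht : t.val < h
    · simp [kX, kp, ht]
    · simp [kX, kp, ht, not_lt.mp ht]


theorem natcard_exists' {S κ : Type*} [Finite S] (Idx : Finset κ) (A : κ → S → Prop) (N : κ → ℕ)
    (hN : ∀ k ∈ Idx, Nat.card {x // A k x} ≤ N k) :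
    Nat.card {x // ∃ k ∈ Idx, A k x} ≤ ∑ k ∈ Idx, N k :=
  (natcard_exists Idx A).trans (Finset.sum_le_sum hN)

theorem UF_le {G : Type*} [AddCommGroup G] {b0 b1 R : ℕ} (h T : ℕ) (a0 : Fin b0 → G) (a1 : Fin b1 → G)
    (σ : G) (d : Fin R → G) :
    Nat.card {π // UF h T a0 a1 σ d π} ≤
      ∑ i ∈ Finset.range b0, phi d (fun v => seg R 0 v) T (pfx a0 i - pfx a0 b0) +
      phi d (fun v => seg R 0 v) T (σ - pfx a0 b0) +
      ∑ i ∈ Finset.range b1, phi d (fun v => seg R h v) T (pfx a1 i - pfx a1 b1) := by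
  unfold phi
  rw [Finset.sum_comm, Finset.sum_comm (s := Finset.range b1), ← Finset.sum_add_distrib,
    ← Finset.sum_add_distrib]
  unfold UF
  apply natcard_exists'
  intro v hv
  refine (natcard_le3 _ _ _ _ (fun x hx => hx)).trans ?_
  refine Nat.add_le_add (Nat.add_le_add ?_ le_rfl) ?_
  · exact natcard_exists _ _
  · exact natcard_exists _ _

theorem natcard_le2 {S : Type*} [Finite S] (B C : S → Prop) :
    Nat.card {x // B x ∨ C x} ≤ Nat.card {x // B x} + Nat.card {x // C x} := by
  have := natcard_le3 (fun x => B x ∨ C x) B C (fun _ => False) (fun x hx => by tauto)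
  simpa using this

theorem UL_le {G : Type*} [AddCommGroup G] {b0 b1 R : ℕ} (h T : ℕ) (a0 : Fin b0 → G) (a1 : Fin b1 → G)
    (σ : G) (d : Fin R → G) :
    Nat.card {π // UL h T a0 a1 σ d π} ≤
      ∑ i ∈ Finset.Ico 1 (b1 + 1), phi d (fun u => seg R (h - u) u) T (- pfx a1 i) +
      ∑ i ∈ Finset.range (b0 + 1), phi d (fun u => seg R (2 * h - u) u) T (σ - pfx a0 i) := by
  unfold phi
  rw [Finset.sum_comm, Finset.sum_comm (s := Finset.range (b0 + 1)), ← Finset.sum_add_distrib]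
  unfold UL
  apply natcard_exists'
  intro v hv
  refine (natcard_le2 _ _).trans ?_
  refine Nat.add_le_add ?_ ?_
  · exact natcard_exists _ _
  · exact natcard_exists _ _

theorem sum_range_le_ico (b : ℕ) (g : ℕ → ℕ) :
    ∑ i ∈ Finset.range b, g i ≤ g 0 + ∑ i ∈ Finset.Ico 1 b, g i := by
  cases b with
  | zero => simp
  | succ b => rw [Finset.range_eq_Ico, Finset.sum_eq_sum_Ico_succ_bot (by omega)]

theorem sum_ico_succ_le (b : ℕ) (g : ℕ → ℕ) :
    ∑ i ∈ Finset.Ico 1 (b + 1), g i ≤ ∑ i ∈ Finset.Ico 1 b, g i + g b := by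
  cases b with
  | zero => simp
  | succ b => rw [Finset.sum_Ico_succ_top (by omega)]

theorem ordF {G : Type*} [AddCommGroup G] [DecidableEq G] (X : Finset G) (ρ : G → ℤ)
    (hpos : ∀ x ∈ X, 0 < ρ x) (hr : RectOn X ρ) (w : G → ℕ) (R T N0 : ℕ) (hT : 1 ≤ T)
    (hN0 : 1 ≤ N0)
    (hW : ∀ C : Finset G, ∑ c ∈ C, w c ≤ 2 * T * N0) (hw : ∀ c, R * w c ≤ 4 * N0)
    (hR : 100 * (200 * T + (200 * T) ^ 2) ≤ R) (f : G) :
    ∃ (b : ℕ) (a : Fin b → G), Function.Injective a ∧ (∀ x, x ∈ X ↔ ∃ i, a i = x) ∧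
      (∀ i, 0 < i → i < b → pfx a i ≠ f) ∧ (∀ i j, i < j → j ≤ b → pfx a i ≠ pfx a j) ∧
      pfx a b = ∑ x ∈ X, x ∧
      25 * ∑ i ∈ Finset.Ico 1 b, w (pfx a i) ≤ N0 := by
  obtain ⟨L, hnd, hX, hf, hc⟩ := ord X ρ hpos hr w R T N0 hT hN0 hW hw hR f
  have hp : ∀ i, pfx L.get i = (L.take i).sum := by
    intro i
    have := List.sum_take_ofFn L.get i
    rw [List.ofFn_get] at this
    exact this.symm
  have hmem : ∀ x ∈ L, x ∈ X := fun x hx => by rw [← hX]; simpa using hx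
  refine ⟨L.length, L.get, List.nodup_iff_injective_get.mp hnd, ?_, ?_, ?_, ?_, ?_⟩
  · intro x; rw [← hX, List.mem_toFinset, List.mem_iff_get]
  · intro i; rw [hp]; exact hf i
  · intro i j hij hj heq
    rw [hp, hp] at heq
    have h1 := (hr.list _ _ (hnd.sublist (List.take_sublist i L)) (hnd.sublist (List.take_sublist j L))
      (fun x hx => hmem x (List.mem_of_mem_take hx)) (fun x hx => hmem x (List.mem_of_mem_take hx))).1 heq
    have hsplit : L.take j = L.take i ++ (L.drop i).take (j - i) := by
      rw [← List.take_add]; congr 1; omega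
    rw [hsplit, List.map_append, List.sum_append] at h1
    have h2 : 0 < (((L.drop i).take (j - i)).map ρ).sum := by
      apply List.sum_pos
      · intro y hy
        obtain ⟨x, hx, rfl⟩ := List.mem_map.mp hy
        exact hpos x (hmem x (List.mem_of_mem_drop (List.mem_of_mem_take hx)))
      · intro h
        have := congrArg List.length h
        simp at this
        omega
    omega
  · rw [hp, List.take_length, ← hX, List.sum_toFinset _ hnd]; simp
  · simpa only [hp] using hc

theorem w_sum {R : ℕ} {G : Type*} [AddCommGroup G] (d d' : Fin R → G)
    (sd sd' : ℕ → Finset (Fin R)) (T : ℕ) (g g' : G → G) (hg : Function.Injective g)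
    (hg' : Function.Injective g') (C : Finset G) :
    ∑ c ∈ C, (phi d sd T (g c) + phi d' sd' T (g' c)) ≤ 2 * T * R.factorial := by
  classical
  rw [Finset.sum_add_distrib]
  have h1 := sum_phi_le d sd T (C.map ⟨g, hg⟩)
  have h2 := sum_phi_le d' sd' T (C.map ⟨g', hg'⟩)
  rw [Finset.sum_map] at h1 h2
  simp only [Function.Embedding.coeFn_mk] at h1 h2
  calc _ ≤ _ := Nat.add_le_add h1 h2
    _ = _ := by ring

theorem case2' {G : Type*} [AddCommGroup G] [DecidableEq G] {s h T : ℕ} (hs : 2 ≤ s) (hT : 1 ≤ T)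
    (hR : 100 * (200 * T + (200 * T) ^ 2) ≤ 2 * h) (A E : Finset G) (hn : 2 * A.card ^ 2 < 2 ^ T)
    (d : Fin s → Fin (2 * h) → G) (hd : ∀ l, Dissoc (d l))
    (hdi : Function.Injective (fun p : Fin s × Fin (2 * h) => d p.1 p.2))
    (hdE : ∀ l t, d l t ∉ E)
    (hA : A = E ∪ Finset.univ.image (fun p : Fin s × Fin (2 * h) => d p.1 p.2))
    (ρ : G → ℤ) (hr : RectOn E ρ) (h0 : (0 : G) ∉ E)
    (hN : E.filter (fun x => ρ x < 0) = ∅ ∨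
      ∑ x ∈ E.filter (fun x => ρ x < 0), x ≠ ∑ x ∈ A, x) : Sequenceable A := by
  have hne := hr.ne_zero h0
  set σ := ∑ x ∈ A, x with hσ
  set N := E.filter (fun x => ρ x < 0) with hNdef
  set P := E.filter (fun x => 0 < ρ x) with hPdef
  have hTT : T ≤ T ^ 2 := by nlinarith
  have hh : 2 * T ≤ h := by nlinarith
  have hf1 : 1 ≤ (2 * h).factorial := Nat.factorial_pos _
  let fst : Fin s := ⟨0, by omega⟩
  let lst : Fin s := ⟨s - 1, by omega⟩
  have p5 := phi_le (d fst) (hd fst) (fun v => seg (2 * h) 0 v) T (by omega) (fun u hu => by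
    rw [Finset.mem_Ico] at hu; exact card_seg _ _ _ (by omega))
  have p3 := phi_le (d fst) (hd fst) (fun v => seg (2 * h) h v) T (by omega) (fun u hu => by
    rw [Finset.mem_Ico] at hu; exact card_seg _ _ _ (by omega))
  have p4 := phi_le (d lst) (hd lst) (fun u => seg (2 * h) (h - u) u) T (by omega) (fun u hu => by
    rw [Finset.mem_Ico] at hu; exact card_seg _ _ _ (by omega))
  have p6 := phi_le (d lst) (hd lst) (fun u => seg (2 * h) (2 * h - u) u) T (by omega) (fun u hu => by
    rw [Finset.mem_Ico] at hu; exact card_seg _ _ _ (by omega))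
  obtain ⟨b0, a0, i0, m0, f0, q0, t0, w0⟩ := ordF N (fun x => - ρ x)
    (fun x hx => by have := (Finset.mem_filter.mp hx).2; omega)
    (hr.neg.mono (Finset.filter_subset _ _))
    (fun x => phi (d lst) (fun u => seg (2 * h) (2 * h - u) u) T (σ - x) +
      phi (d fst) (fun v => seg (2 * h) 0 v) T (x - ∑ x ∈ N, x)) (2 * h) T (2 * h).factorial hT hf1
    (w_sum _ _ _ _ _ _ _ sub_right_injective sub_left_injective)
    (fun c => by rw [mul_add]; have := p6 (σ - c); have := p5 (c - ∑ x ∈ N, x); omega) hR σ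
  obtain ⟨b1, a1, i1, m1, -, q1, t1, w1⟩ := ordF P ρ
    (fun x hx => (Finset.mem_filter.mp hx).2)
    (hr.mono (Finset.filter_subset _ _))
    (fun x => phi (d lst) (fun u => seg (2 * h) (h - u) u) T (- x) +
      phi (d fst) (fun v => seg (2 * h) h v) T (x - ∑ x ∈ P, x)) (2 * h) T (2 * h).factorial hT hf1
    (w_sum _ _ _ _ _ _ _ neg_injective sub_left_injective)
    (fun c => by rw [mul_add]; have := p4 (- c); have := p3 (c - ∑ x ∈ P, x); omega) hR 0
  rw [Finset.sum_add_distrib] at w0 w1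
  rw [← t0] at w0
  rw [← t1] at w1
  have hinj : Function.Injective (aval a0 a1 d) := by
    have e0 : ∀ i, a0 i ∈ N := fun i => (m0 _).2 ⟨i, rfl⟩
    have e1 : ∀ i, a1 i ∈ P := fun i => (m1 _).2 ⟨i, rfl⟩
    simp only [hNdef, hPdef, Finset.mem_filter] at e0 e1
    rintro ((x | x) | ⟨l, t⟩) ((y | y) | ⟨m, r⟩) hxy <;>
      simp only [aval, Sum.elim_inl, Sum.elim_inr] at hxy
    · rw [i0 hxy]
    · have := (e0 x).2; have := (e1 y).2; rw [hxy] at *; omega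
    · exact absurd (hxy ▸ (e0 x).1) (hdE _ _)
    · have := (e1 x).2; have := (e0 y).2; rw [hxy] at *; omega
    · rw [i1 hxy]
    · exact absurd (hxy ▸ (e1 x).1) (hdE _ _)
    · exact absurd (hxy ▸ (e0 y).1) (hdE _ _)
    · exact absurd (hxy ▸ (e1 y).1) (hdE _ _)
    · rw [@hdi (l, t) (m, r) hxy]
  have himg : A = Finset.univ.image (aval a0 a1 d) := by
    rw [hA]
    ext x
    have hx : x ∈ E ↔ x ∈ N ∨ x ∈ P := by
      simp only [hNdef, hPdef, Finset.mem_filter]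
      constructor
      · intro hx; have := hne x hx; rcases lt_or_gt_of_ne this with h | h
        · exact Or.inl ⟨hx, h⟩
        · exact Or.inr ⟨hx, h⟩
      · rintro (h | h) <;> exact h.1
    rw [Finset.mem_union, hx, m0, m1]
    simp only [Finset.mem_image, Finset.mem_univ, true_and, Sum.exists, aval, Sum.elim_inl,
      Sum.elim_inr]
  have hσ' : σ = ∑ z, aval a0 a1 d z := by
    rw [hσ, himg, Finset.sum_image (fun x _ y _ h => hinj h)]
  have hcard : A.card = b0 + b1 + s * (2 * h) := by
    rw [himg, Finset.card_image_of_injective _ hinj]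
    simp
  rw [himg]
  have hbig : ∀ x, 2 * h * x ≤ 2 * (2 * h).factorial → 1000 * x ≤ (2 * h).factorial := by
    intro x hx
    have : 2000 ≤ 2 * h := by nlinarith
    have := Nat.mul_le_mul_right x this
    omega
  refine core hs hT hh (by nlinarith) (by rw [← hcard]; exact hn) a0 a1 d hd hinj σ hσ' q0 q1 ?_
    fst lst rfl rfl ?_ ?_
  · intro i hi hib
    rcases Nat.lt_or_ge i b0 with h | h
    · exact f0 i hi h
    · have : i = b0 := by omega
      subst this
      rw [t0]
      rcases hN with hN | hN
      · have := (m0 (a0 ⟨0, hi⟩)).2 ⟨_, rfl⟩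
        rw [hN] at this
        simp at this
      · exact hN
  · have k0 := UF_le h T a0 a1 σ (d fst)
    have k1 := sum_range_le_ico b0 (fun i => phi (d fst) (fun v => seg (2 * h) 0 v) T (pfx a0 i - pfx a0 b0))
    have k2 := sum_range_le_ico b1 (fun i => phi (d fst) (fun v => seg (2 * h) h v) T (pfx a1 i - pfx a1 b1))
    have k3 := hbig _ (p5 (pfx a0 0 - pfx a0 b0))
    have k4 := hbig _ (p5 (σ - pfx a0 b0))
    have k5 := hbig _ (p3 (pfx a1 0 - pfx a1 b1))
    omega
  · have k0 := UL_le h T a0 a1 σ (d lst)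
    have k1 := sum_ico_succ_le b1 (fun i => phi (d lst) (fun u => seg (2 * h) (h - u) u) T (- pfx a1 i))
    have k2 := sum_range_le_ico (b0 + 1) (fun i => phi (d lst) (fun u => seg (2 * h) (2 * h - u) u) T (σ - pfx a0 i))
    have k6 := sum_ico_succ_le b0 (fun i => phi (d lst) (fun u => seg (2 * h) (2 * h - u) u) T (σ - pfx a0 i))
    have k3 := hbig _ (p4 (- pfx a1 b1))
    have k4 := hbig _ (p6 (σ - pfx a0 0))
    have k5 := hbig _ (p6 (σ - pfx a0 b0))
    omega

theorem case2 {G : Type*} [AddCommGroup G] [DecidableEq G] {s h T : ℕ} (hs : 2 ≤ s) (hT : 1 ≤ T)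
    (hR : 100 * (200 * T + (200 * T) ^ 2) ≤ 2 * h) (A E : Finset G) (hn : 2 * A.card ^ 2 < 2 ^ T)
    (d : Fin s → Fin (2 * h) → G) (hd : ∀ l, Dissoc (d l))
    (hdi : Function.Injective (fun p : Fin s × Fin (2 * h) => d p.1 p.2))
    (hdE : ∀ l t, d l t ∉ E)
    (hA : A = E ∪ Finset.univ.image (fun p : Fin s × Fin (2 * h) => d p.1 p.2))
    (ρ : G → ℤ) (hr : RectOn E ρ) (h0 : (0 : G) ∉ E) : Sequenceable A := by
  by_cases hN : E.filter (fun x => ρ x < 0) = ∅ ∨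
      ∑ x ∈ E.filter (fun x => ρ x < 0), x ≠ ∑ x ∈ A, x
  · exact case2' hs hT hR A E hn d hd hdi hdE hA ρ hr h0 hN
  · refine case2' hs hT hR A E hn d hd hdi hdE hA (fun x => - ρ x) hr.neg h0 ?_
    push Not at hN
    by_contra hP
    push Not at hP
    have h1 := (hr _ (Finset.filter_subset _ _) _ (Finset.filter_subset _ _)).1 (hN.2.trans hP.2.symm)
    have h2 : ∑ x ∈ E.filter (fun x => ρ x < 0), ρ x < 0 :=
      Finset.sum_neg (fun x hx => (Finset.mem_filter.mp hx).2) hN.1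
    have h3 : 0 < ∑ x ∈ E.filter (fun x => - ρ x < 0), ρ x :=
      Finset.sum_pos (fun x hx => by have := (Finset.mem_filter.mp hx).2; omega) hP.1
    omega


theorem main_nat (k : ℕ) (hk : 2 ≤ k) (A : Finset (ZMod k)) (h0 : (0 : ZMod k) ∉ A) (T h Q : ℕ)
    (hT : 1 ≤ T) (hn : 2 * A.card ^ 2 < 2 ^ T)
    (hR : 100 * (200 * T + (200 * T) ^ 2) ≤ 2 * h) (hQ : 2 * A.card * (4 * h) < Q)
    (hp : Q ^ (4 * h) < k.minFac) : Sequenceable A := by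
  obtain ⟨s, d, E, hd, hdi, hdE, hA, hE⟩ := decomp (2 * h) (by omega) A.card A rfl
  obtain ⟨B, hBE, hB, hS⟩ := exists_span E (2 * h) hE
  have hEA : E ⊆ A := by rw [hA]; exact Finset.subset_union_left
  rcases Nat.lt_or_ge s 2 with hs | hs
  · have hcard : (Finset.univ.image (fun p : Fin s × Fin (2 * h) => d p.1 p.2)).card ≤ 2 * h := by
      refine Finset.card_image_le.trans ?_
      simp only [Finset.card_univ, Fintype.card_prod, Fintype.card_fin]
      calc _ ≤ 1 * (2 * h) := Nat.mul_le_mul_right _ (by omega)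
        _ = _ := one_mul _
    obtain ⟨ρ, hρ⟩ := rectify k A.card (4 * h) Q hk
      (B ∪ Finset.univ.image (fun p : Fin s × Fin (2 * h) => d p.1 p.2)) A
      ((Finset.card_union_le _ _).trans (by omega)) le_rfl hQ hp (by
        intro e he
        rw [hA, Finset.mem_union] at he
        rcases he with he | he
        · exact (hS e he).mono Finset.subset_union_left
        · exact Spn.of_mem (Finset.mem_union_right _ he))
    exact seq_of_rect A ρ hρ h0
  · obtain ⟨ρ, hρ⟩ := rectify k A.card (4 * h) Q hk B E (by omega) (Finset.card_le_card hEA) hQ hp hS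
    exact case2 hs hT hR A E hn d hd hdi hdE hA ρ hρ (fun hc => h0 (hEA hc))

theorem seq_small {G : Type*} [AddCommGroup G] [DecidableEq G] (A : Finset G) (h : A.card ≤ 1) :
    Sequenceable A := by
  refine ⟨A.toList, A.nodup_toList, A.toList_toFinset, ?_, ?_⟩
  · intro i j hi hij hj
    rw [Finset.length_toList] at hj
    omega
  · intro i hi hi'
    rw [Finset.length_toList] at hi'
    omega

/-- There exists an absolute constant `c > 0` such that for every integer `k ≥ 2`,
with `p` the least prime divisor of `k`, every subset `A ⊆ ℤ_k \ {0}` with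
`|A| ≤ exp(c (log p)^(1/3))` is sequenceable. -/
theorem improved_classical_bound :
    ∃ c : ℝ, 0 < c ∧
      ∀ k : ℕ, 2 ≤ k →
        ∀ A : Finset (ZMod k), (0 : ZMod k) ∉ A →
          (A.card : ℝ) ≤ Real.exp (c * (Real.log (k.minFac : ℝ)) ^ ((1 : ℝ) / 3)) →
            Sequenceable A := by
  refine ⟨1 / 10000, by norm_num, ?_⟩
  intro k hk A h0 hA
  rcases Nat.lt_or_ge A.card 2 with hc | hc
  · exact seq_small A (by omega)
  set m := Nat.log 2 A.card with hm
  have hm1 : 1 ≤ m := Nat.log_pos (by norm_num) hc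
  have hlo : 2 ^ m ≤ A.card := Nat.pow_log_le_self 2 (by omega)
  have hhi : A.card < 2 ^ (m + 1) := Nat.lt_pow_succ_log_self (by norm_num) _
  have hmm : m ≤ m ^ 2 := by nlinarith
  have hm2 : m < 2 ^ m := Nat.lt_two_pow_self
  refine main_nat k hk A h0 (2 * m + 3) (52500000 * m ^ 2) (2 ^ (33 * m)) (by omega) ?_ ?_ ?_ ?_
  · have : A.card ^ 2 < (2 ^ (m + 1)) ^ 2 := Nat.pow_lt_pow_left hhi (by norm_num)
    calc 2 * A.card ^ 2 < 2 * (2 ^ (m + 1)) ^ 2 := by omega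
      _ = _ := by ring
  · nlinarith
  · have h1 : m ^ 2 ≤ (2 ^ m) ^ 2 := Nat.pow_le_pow_left hm2.le _
    have h2 : 2 * A.card * (4 * (52500000 * m ^ 2)) ≤ 2 * A.card * (2 ^ 28 * (2 ^ m) ^ 2) :=
      Nat.mul_le_mul_left _ (by omega)
    have h3 : 2 * A.card * (2 ^ 28 * (2 ^ m) ^ 2) < 2 * 2 ^ (m + 1) * (2 ^ 28 * (2 ^ m) ^ 2) :=
      Nat.mul_lt_mul_of_pos_right (by omega) (by positivity)
    have h4 : 2 * 2 ^ (m + 1) * (2 ^ 28 * (2 ^ m) ^ 2) = 2 ^ (3 * m + 30) := by ring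
    have h5 : (2 : ℕ) ^ (3 * m + 30) ≤ 2 ^ (33 * m) := Nat.pow_le_pow_right (by norm_num) (by omega)
    omega
  · by_contra hcon
    push Not at hcon
    rw [← pow_mul] at hcon
    have hpp : 0 < k.minFac := Nat.minFac_pos k
    have hp1 : (1 : ℝ) ≤ (k.minFac : ℝ) := by exact_mod_cast hpp
    have hlp : 0 ≤ Real.log (k.minFac : ℝ) := Real.log_nonneg hp1
    have hl2 : (1 / 2 : ℝ) < Real.log 2 := by have := Real.log_two_gt_d9; linarith
    have hlogp : Real.log (k.minFac : ℝ) ≤ (6930000000 * (m : ℝ) ^ 3) * Real.log 2 := by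
      have h1 : ((k.minFac : ℕ) : ℝ) ≤ (2 : ℝ) ^ (33 * m * (4 * (52500000 * m ^ 2))) := by
        exact_mod_cast hcon
      have h2 := Real.log_le_log (by linarith) h1
      rw [Real.log_pow] at h2
      push_cast at h2
      calc _ ≤ _ := h2
        _ = _ := by ring
    set x := (Real.log (k.minFac : ℝ)) ^ ((1 : ℝ) / 3) with hx
    have hx3 : x ^ 3 = Real.log (k.minFac : ℝ) := by
      rw [hx, ← Real.rpow_natCast, ← Real.rpow_mul hlp]; norm_num
    have h1 : (m : ℝ) * Real.log 2 ≤ 1 / 10000 * x := by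
      rw [← Real.log_pow]
      have h2 : ((2 : ℝ) ^ m) ≤ Real.exp (1 / 10000 * x) := by
        refine le_trans ?_ hA
        exact_mod_cast hlo
      have := Real.log_le_log (by positivity) h2
      rwa [Real.log_exp] at this
    have h2 := pow_le_pow_left₀ (by positivity) h1 3
    have h3 : ((m : ℝ) * Real.log 2) ^ 3 ≤ (1 / 10000) ^ 3 * ((6930000000 * (m : ℝ) ^ 3) * Real.log 2) := by
      refine h2.trans ?_
      rw [mul_pow, hx3]
      exact mul_le_mul_of_nonneg_left hlogp (by positivity)
    have hmp : (0 : ℝ) < (m : ℝ) ^ 3 * Real.log 2 := by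
      have : (0 : ℝ) < m := by exact_mod_cast hm1
      positivity
    have h4 : ((m : ℝ) ^ 3 * Real.log 2) * (Real.log 2) ^ 2 ≤ ((m : ℝ) ^ 3 * Real.log 2) * (693 / 100000) := by
      calc _ = ((m : ℝ) * Real.log 2) ^ 3 := by ring
        _ ≤ _ := h3
        _ = _ := by ring
    have h5 := le_of_mul_le_mul_left h4 hmp
    nlinarith
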